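/- arXiv:2408.08445 — 2 statements merged into one kernel-verified Lean document; each statement's English description precedes it below -/
import Mathlib

section
/- For any choice of parameters as in the context, and for all t₁, t₂, x₁, x₂ ∈ ℝ and all α, β ∈ ℝ with α + t₁ < ā and β + t₂ > b̄: (i) the double contour integral defining K³ converges absolutely (the integrand is absolutely integrable over Γ_α^+ × Γ_β^- with respect to the piecewise-linear parametrization); (ii) the value K_{a,b,c}(t₁,x₁;t₂,x₂) = K¹ + K² + K³ does not depend on the choice of α and β subject to α + t₁ < ā and β + t₂ > b̄; (iii) for every fixed t₁, t₂ ∈ ℝ, the map (x₁,x₂) ↦ K_{a,b,c}(t₁,x₁;t₂,x₂) is continuous on ℝ². -/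
open MeasureTheory Filter Topology Complex intervalIntegral
open scoped ENNReal

noncomputable section

/-- The parameters of the Airy wanderer kernel: four summable nonincreasing
sequences of nonnegative reals and two nonnegative constants. -/
structure AWParams where
  ap : ℕ → ℝ
  am : ℕ → ℝ
  bp : ℕ → ℝ
  bm : ℕ → ℝ
  cp : ℝ
  cm : ℝ
  ap_nonneg : ∀ i, 0 ≤ ap i
  am_nonneg : ∀ i, 0 ≤ am i
  bp_nonneg : ∀ i, 0 ≤ bp i
  bm_nonneg : ∀ i, 0 ≤ bm i
  ap_anti : Antitone ap
  am_anti : Antitone am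
  bp_anti : Antitone bp
  bm_anti : Antitone bm
  sum_fin : Summable fun i => ap i + am i + bp i + bm i
  cp_nonneg : 0 ≤ cp
  cm_nonneg : 0 ≤ cm

namespace AWParams

/-- The threshold `ā ∈ [0, ∞]`. -/
def abar (P : AWParams) : EReal :=
  if 0 < P.am 0 + P.bm 0 + P.cm then (0 : EReal)
  else if P.ap 0 = 0 then (⊤ : EReal)
  else (((P.ap 0)⁻¹ : ℝ) : EReal)

/-- The threshold `b̄ ∈ [-∞, 0]`. -/
def bbar (P : AWParams) : EReal :=
  if 0 < P.am 0 + P.bm 0 + P.cm then (0 : EReal)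
  else if P.bp 0 = 0 then (⊥ : EReal)
  else ((-(P.bp 0)⁻¹ : ℝ) : EReal)

/-- The function `Φ_{a,b,c}`. -/
def Phi (P : AWParams) (z : ℂ) : ℂ :=
  Complex.exp ((P.cp : ℂ) * z + (P.cm : ℂ) / z) *
    ∏' i : ℕ,
      ((1 + (P.bp i : ℂ) * z) * (1 + (P.bm i : ℂ) / z)) /
        ((1 - (P.ap i : ℂ) * z) * (1 - (P.am i : ℂ) / z))

end AWParams

/-- Arc-length parametrization of `Γ_a^+` (increasing imaginary part). -/
def gammaP (a y : ℝ) : ℂ :=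
  (a : ℂ) + ((|y| : ℝ) : ℂ) / ((Real.sqrt 2 : ℝ) : ℂ) +
    ((y : ℝ) : ℂ) * Complex.I / ((Real.sqrt 2 : ℝ) : ℂ)

/-- The (a.e.) derivative of the parametrization of `Γ_a^+`. -/
def gammaPD (y : ℝ) : ℂ :=
  (((Real.sign y : ℝ)) : ℂ) / ((Real.sqrt 2 : ℝ) : ℂ) +
    Complex.I / ((Real.sqrt 2 : ℝ) : ℂ)

/-- Arc-length parametrization of `Γ_a^-` (increasing imaginary part). -/
def gammaM (a y : ℝ) : ℂ :=
  (a : ℂ) - ((|y| : ℝ) : ℂ) / ((Real.sqrt 2 : ℝ) : ℂ) +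
    ((y : ℝ) : ℂ) * Complex.I / ((Real.sqrt 2 : ℝ) : ℂ)

/-- The (a.e.) derivative of the parametrization of `Γ_a^-`. -/
def gammaMD (y : ℝ) : ℂ :=
  -(((Real.sign y : ℝ)) : ℂ) / ((Real.sqrt 2 : ℝ) : ℂ) +
    Complex.I / ((Real.sqrt 2 : ℝ) : ℂ)

/-- The integrand of `K³_{a,b,c}`. -/
def K3Integrand (P : AWParams) (t₁ x₁ t₂ x₂ : ℝ) (z w : ℂ) : ℂ :=
  Complex.exp (z ^ 3 / 3 - (x₁ : ℂ) * z - w ^ 3 / 3 + (x₂ : ℂ) * w) /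
      (z + (t₁ : ℂ) - w - (t₂ : ℂ)) *
    (P.Phi (z + (t₁ : ℂ)) / P.Phi (w + (t₂ : ℂ)))

/-- The integrand of `K³_{a,b,c}` in the parametrization of `Γ_α^+ × Γ_β^-`,
including the derivative factors. -/
def K3param (P : AWParams) (α β t₁ x₁ t₂ x₂ : ℝ) (y₁ y₂ : ℝ) : ℂ :=
  K3Integrand P t₁ x₁ t₂ x₂ (gammaP α y₁) (gammaM β y₂) * gammaPD y₁ * gammaMD y₂

/-- `K³_{a,b,c}` with contours `Γ_α^+`, `Γ_β^-`. -/
def K3 (P : AWParams) (α β t₁ x₁ t₂ x₂ : ℝ) : ℂ :=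
  (1 / (2 * (Real.pi : ℂ) * Complex.I)) ^ 2 *
    ∫ p : ℝ × ℝ, K3param P α β t₁ x₁ t₂ x₂ p.1 p.2

/-- `K²_{a,b,c}`. -/
def K2 (t₁ x₁ t₂ x₂ : ℝ) : ℂ :=
  if t₁ < t₂ then
    -((((Real.sqrt (4 * Real.pi * (t₂ - t₁)))⁻¹ : ℝ) : ℂ) *
      Complex.exp
        (((-(x₂ - x₁) ^ 2 / (4 * (t₂ - t₁)) - (t₂ - t₁) * (x₂ + x₁) / 2 +
            (t₂ - t₁) ^ 3 / 12 : ℝ)) : ℂ))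
  else 0

/-- The point `w = (α+t₁+β+t₂)/2 + i s` of the vertical segment in `K¹`. -/
def K1seg (α β t₁ t₂ s : ℝ) : ℂ :=
  (((α + t₁ + β + t₂) / 2 : ℝ) : ℂ) + (s : ℂ) * Complex.I

/-- `K¹_{a,b,c}`: zero unless the contours cross, in which case it is the integral
over the vertical segment from `u₋` to `u₊` (parametrized by the imaginary part,
with `dw = i ds`). -/
def K1 (α β t₁ x₁ t₂ x₂ : ℝ) : ℂ :=
  if α + t₁ < β + t₂ then
    (1 / (2 * (Real.pi : ℂ) * Complex.I)) *
      ∫ s in (-((β + t₂ - (α + t₁)) / 2))..((β + t₂ - (α + t₁)) / 2),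
        Complex.exp
          (((t₂ - t₁ : ℝ) : ℂ) * (K1seg α β t₁ t₂ s) ^ 2 +
            ((t₁ ^ 2 - t₂ ^ 2 : ℝ) : ℂ) * K1seg α β t₁ t₂ s +
            K1seg α β t₁ t₂ s * ((x₂ - x₁ : ℝ) : ℂ) +
            ((x₁ * t₁ - x₂ * t₂ - t₁ ^ 3 / 3 + t₂ ^ 3 / 3 : ℝ) : ℂ)) * Complex.I
  else 0

/-- The Airy wanderer kernel `K_{a,b,c}`, computed with contours `Γ_α^+`, `Γ_β^-`. -/
def KabcAt (P : AWParams) (α β t₁ x₁ t₂ x₂ : ℝ) : ℂ :=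
  K1 α β t₁ x₁ t₂ x₂ + K2 t₁ x₁ t₂ x₂ + K3 P α β t₁ x₁ t₂ x₂

/-- The Airy wanderer kernel `K_{a,b,c}` (with the canonical admissible choice
`α = -t₁ - 1`, `β = -t₂ + 1`; the value is independent of the admissible choice). -/
def Kabc (P : AWParams) (t₁ x₁ t₂ x₂ : ℝ) : ℂ :=
  KabcAt P (-t₁ - 1) (-t₂ + 1) t₁ x₁ t₂ x₂


/-- The apex coordinate: `u` lies on `Γ_{mm u}^+`. -/
def mm (u : ℂ) : ℝ := u.re - |u.im|

def Good (P : AWParams) (a : ℝ) : Prop :=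
  P.ap 0 * a < 1 ∧ (a < 0 ∨ (P.cm = 0 ∧ ∀ i, P.am i = 0 ∧ P.bm i = 0))

def AWParams.swap (P : AWParams) : AWParams where
  ap := P.bp
  am := P.bm
  bp := P.ap
  bm := P.am
  cp := P.cp
  cm := P.cm
  ap_nonneg := P.bp_nonneg
  am_nonneg := P.bm_nonneg
  bp_nonneg := P.ap_nonneg
  bm_nonneg := P.am_nonneg
  ap_anti := P.bp_anti
  am_anti := P.bm_anti
  bp_anti := P.ap_anti
  bm_anti := P.am_anti
  sum_fin := by
    refine P.sum_fin.congr fun i => ?_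
    ring
  cp_nonneg := P.cp_nonneg
  cm_nonneg := P.cm_nonneg

lemma swap_swap (P : AWParams) : P.swap.swap = P := rfl

lemma good_of_lt {P : AWParams} {a : ℝ} (h : (a : EReal) < P.abar) : Good P a := by
  unfold AWParams.abar at h
  have h1 := P.am_nonneg 0
  have h2 := P.bm_nonneg 0
  have h3 := P.cm_nonneg
  have h4 := P.ap_nonneg 0
  split_ifs at h with c1 c2
  · have ha : a < 0 := by exact_mod_cast h
    refine ⟨?_, Or.inl ha⟩
    nlinarith
  · refine ⟨by simp [c2], Or.inr ⟨by linarith, fun i => ⟨?_, ?_⟩⟩⟩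
    · exact le_antisymm ((P.am_anti (Nat.zero_le i)).trans (by linarith)) (P.am_nonneg i)
    · exact le_antisymm ((P.bm_anti (Nat.zero_le i)).trans (by linarith)) (P.bm_nonneg i)
  · have ha : a < (P.ap 0)⁻¹ := by exact_mod_cast h
    have hp : 0 < P.ap 0 := lt_of_le_of_ne h4 (Ne.symm c2)
    refine ⟨?_, Or.inr ⟨by linarith, fun i => ⟨?_, ?_⟩⟩⟩
    · have := mul_lt_mul_of_pos_left ha hp
      rwa [mul_inv_cancel₀ c2] at this
    · exact le_antisymm ((P.am_anti (Nat.zero_le i)).trans (by linarith)) (P.am_nonneg i)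
    · exact le_antisymm ((P.bm_anti (Nat.zero_le i)).trans (by linarith)) (P.bm_nonneg i)

lemma exists_lt_abar {P : AWParams} {a : ℝ} (h : (a : EReal) < P.abar) :
    ∃ a0 : ℝ, a < a0 ∧ (a0 : EReal) < P.abar := by
  obtain ⟨x, h1, h2⟩ := EReal.lt_iff_exists_real_btwn.1 h
  exact ⟨x, by exact_mod_cast h1, h2⟩

lemma swap_abar (P : AWParams) : P.swap.abar = -P.bbar := by
  unfold AWParams.abar AWParams.bbar AWParams.swap
  simp only
  rw [show P.bm 0 + P.am 0 + P.cm = P.am 0 + P.bm 0 + P.cm by ring]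
  split_ifs <;> simp

lemma lt_swap_abar {P : AWParams} {b : ℝ} (h : P.bbar < (b : EReal)) :
    ((-b : ℝ) : EReal) < P.swap.abar := by
  rw [swap_abar, EReal.coe_neg]
  exact EReal.neg_lt_neg_iff.2 h

lemma bbar_lt_of_swap {P : AWParams} {b : ℝ} (h : ((-b : ℝ) : EReal) < P.swap.abar) :
    P.bbar < (b : EReal) := by
  rw [swap_abar, EReal.coe_neg] at h
  exact EReal.neg_lt_neg_iff.1 h

def fac (P : AWParams) (i : ℕ) (z : ℂ) : ℂ :=
  ((1 + (P.bp i : ℂ) * z) * (1 + (P.bm i : ℂ) / z)) /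
        ((1 - (P.ap i : ℂ) * z) * (1 - (P.am i : ℂ) / z))

def ss (P : AWParams) (i : ℕ) : ℝ := P.ap i + P.am i + P.bp i + P.bm i

lemma ss_nonneg (P : AWParams) (i : ℕ) : 0 ≤ ss P i := by
  have := P.ap_nonneg i
  have := P.am_nonneg i
  have := P.bp_nonneg i
  have := P.bm_nonneg i
  unfold ss; positivity

lemma sub_mm_le (r : ℝ) (u : ℂ) : r - mm u ≤ 2 * ‖(r : ℂ) - u‖ := by
  have h1 := Complex.abs_re_le_norm ((r : ℂ) - u)
  have h2 := Complex.abs_im_le_norm ((r : ℂ) - u)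
  simp at h1 h2
  unfold mm
  have := le_abs_self (r - u.re)
  linarith

lemma prod_bd {x y : ℂ} {p q : ℝ} (hx : ‖x - 1‖ ≤ Real.exp p - 1) (hy : ‖y - 1‖ ≤ Real.exp q - 1) :
    ‖x * y - 1‖ ≤ Real.exp (p + q) - 1 := by
  have h : x * y - 1 = (x - 1) * y + (y - 1) := by ring
  have hy' : ‖y‖ ≤ Real.exp q := by
    have := norm_add_le (y - 1) 1
    simp at this
    linarith
  have : ‖x * y - 1‖ ≤ ‖x - 1‖ * ‖y‖ + ‖y - 1‖ := by
    rw [h, ← norm_mul]; exact norm_add_le _ _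
  have h2 : ‖x - 1‖ * ‖y‖ ≤ (Real.exp p - 1) * Real.exp q :=
    mul_le_mul hx hy' (norm_nonneg _) ((norm_nonneg _).trans hx)
  rw [Real.exp_add]
  linarith

lemma le_exp_sub {x : ℂ} {p : ℝ} (hx : ‖x - 1‖ ≤ p) : ‖x - 1‖ ≤ Real.exp p - 1 := by
  have := Real.add_one_le_exp p
  linarith

lemma good_ne {P : AWParams} {a : ℝ} (h : Good P a) {u : ℂ} (hu : mm u ≤ a) (i : ℕ) :
    (1 - (P.ap i : ℂ) * u) ≠ 0 ∧ (1 - (P.am i : ℂ) / u) ≠ 0 ∧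
      (u ≠ 0 ∨ (P.cm = 0 ∧ ∀ i, P.am i = 0 ∧ P.bm i = 0)) := by
  obtain ⟨h1, h2⟩ := h
  have hai := P.ap_nonneg i
  have hai' : P.ap i ≤ P.ap 0 := P.ap_anti (Nat.zero_le i)
  have hu0 : a < 0 → ∀ r : ℝ, 0 ≤ r → (r : ℂ) - u ≠ 0 := by
    intro ha r hr h0
    have := sub_mm_le r u
    rw [h0] at this
    simp at this
    linarith
  refine ⟨?_, ?_, ?_⟩
  · intro h0
    rcases hai.eq_or_lt with h | h
    · simp [← h] at h0
    have h3 := sub_mm_le (P.ap i)⁻¹ u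
    have h4 : (((P.ap i)⁻¹ : ℝ) : ℂ) - u = 0 := by
      have : (P.ap i : ℂ) ≠ 0 := by exact_mod_cast h.ne'
      push_cast
      field_simp
      linear_combination h0
    rw [h4] at h3
    simp at h3
    have h5 : (P.ap i)⁻¹ ≤ a := by linarith
    have h6 := mul_le_mul_of_nonneg_left h5 h.le
    rw [mul_inv_cancel₀ h.ne'] at h6
    have : 0 < a := lt_of_lt_of_le (inv_pos.2 h) h5
    nlinarith
  · rcases h2 with h2 | h2
    · have e1 := hu0 h2 _ (P.am_nonneg i)
      have e2 := hu0 h2 0 le_rfl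
      have e3 : u ≠ 0 := by simpa using e2
      intro h0
      apply e1
      field_simp at h0
      linear_combination -h0
    · simp [(h2.2 i).1]
  · rcases h2 with h2 | h2
    · left
      simpa using hu0 h2 0 le_rfl
    · exact Or.inr h2

lemma fac_bound {P : AWParams} {a : ℝ} (h : Good P a) :
    ∃ K : ℝ, 0 ≤ K ∧ ∀ u, mm u ≤ a → (∀ i,
      ‖fac P i u - 1‖ ≤ Real.exp (K * (1 + ‖u‖) * ss P i) - 1) ∧
      ‖(P.cm : ℂ) / u‖ ≤ K := by
  have hG := h
  obtain ⟨h1, h2⟩ := h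
  -- lower bound for 1 - a u
  obtain ⟨δ, hδ, hδ1⟩ : ∃ δ : ℝ, 0 < δ ∧ ∀ u, mm u ≤ a → ∀ i, δ ≤ ‖1 - (P.ap i : ℂ) * u‖ := by
    refine ⟨min 1 (1 - P.ap 0 * a) / 2, by
      have : 0 < min 1 (1 - P.ap 0 * a) := lt_min one_pos (by linarith)
      linarith, fun u hu i => ?_⟩
    have hai := P.ap_nonneg i
    have hai' : P.ap i ≤ P.ap 0 := P.ap_anti (Nat.zero_le i)
    have e1 := Complex.abs_re_le_norm (1 - (P.ap i : ℂ) * u)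
    have e2 := Complex.abs_im_le_norm (1 - (P.ap i : ℂ) * u)
    simp [abs_mul, abs_of_nonneg hai] at e1 e2
    have e3 := le_abs_self (1 - P.ap i * u.re)
    have e4 : P.ap i * mm u ≤ P.ap i * a := mul_le_mul_of_nonneg_left hu hai
    unfold mm at e4
    have e5 : min 1 (1 - P.ap 0 * a) ≤ 1 - P.ap i * a := by
      rcases le_total a 0 with ha | ha
      · exact (min_le_left _ _).trans (by nlinarith)
      · exact (min_le_right _ _).trans (by nlinarith)
    linarith
  obtain ⟨ε, hε, hε1⟩ : ∃ ε : ℝ, 0 < ε ∧ ∀ u, mm u ≤ a →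
      (∀ i, ‖(P.bm i : ℂ) / u‖ ≤ P.bm i / ε) ∧
      (∀ i, ‖(1 - (P.am i : ℂ) / u)⁻¹ - 1‖ ≤ P.am i / ε) ∧ ‖(P.cm : ℂ) / u‖ ≤ P.cm / ε := by
    rcases h2 with h2 | h2
    · refine ⟨-a / 2, by linarith, fun u hu => ?_⟩
      have key : ∀ r : ℝ, 0 ≤ r → -a / 2 ≤ ‖(r : ℂ) - u‖ := fun r hr => by
        have := sub_mm_le r u
        linarith
      have k0 : -a / 2 ≤ ‖u‖ := by simpa using key 0 le_rfl
      have hu0 : u ≠ 0 := by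
        intro h0; rw [h0] at k0; simp at k0; linarith
      refine ⟨fun i => ?_, fun i => ?_, ?_⟩
      · rw [norm_div, Complex.norm_real, Real.norm_of_nonneg (P.bm_nonneg i)]
        exact div_le_div_of_nonneg_left (P.bm_nonneg i) (by linarith) k0
      · have hk := key _ (P.am_nonneg i)
        have h3 : (P.am i : ℂ) - u ≠ 0 := by
          intro h0; rw [h0] at hk; simp at hk; linarith
        have h4 : u - (P.am i : ℂ) ≠ 0 := by
          rw [← neg_sub]; exact neg_ne_zero.2 h3
        have : (1 - (P.am i : ℂ) / u)⁻¹ - 1 = -((P.am i : ℂ) / ((P.am i : ℂ) - u)) := by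
          have e : 1 - (P.am i : ℂ) / u = (u - P.am i) / u := by field_simp
          rw [e, inv_div, ← neg_sub u, div_neg, neg_neg]
          field_simp
          ring
        rw [this, norm_neg, norm_div, Complex.norm_real, Real.norm_of_nonneg (P.am_nonneg i)]
        exact div_le_div_of_nonneg_left (P.am_nonneg i) (by linarith) hk
      · rw [norm_div, Complex.norm_real, Real.norm_of_nonneg P.cm_nonneg]
        exact div_le_div_of_nonneg_left P.cm_nonneg (by linarith) k0
    · exact ⟨1, one_pos, fun u hu => ⟨fun i => by simp [(h2.2 i).2], fun i => by simp [(h2.2 i).1],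
        by simp [h2.1]⟩⟩
  have hcm := P.cm_nonneg
  refine ⟨1 + 1 / δ + 1 / ε + P.cm / ε, by positivity, fun u hu => ⟨fun i => ?_, ?_⟩⟩
  · have e1 : ‖(1 + (P.bp i : ℂ) * u) - 1‖ ≤ P.bp i * ‖u‖ := by
      rw [add_sub_cancel_left, norm_mul, Complex.norm_real, Real.norm_of_nonneg (P.bp_nonneg i)]
    have e2 : ‖(1 + (P.bm i : ℂ) / u) - 1‖ ≤ P.bm i / ε := by
      rw [add_sub_cancel_left]; exact (hε1 u hu).1 i
    have e3 : ‖(1 - (P.ap i : ℂ) * u)⁻¹ - 1‖ ≤ P.ap i * ‖u‖ / δ := by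
      have hne := (good_ne hG hu i).1
      have : (1 - (P.ap i : ℂ) * u)⁻¹ - 1 = (P.ap i : ℂ) * u / (1 - (P.ap i : ℂ) * u) := by
        rw [inv_eq_one_div, div_sub_one hne]
        congr 1
        ring
      rw [this, norm_div, norm_mul, Complex.norm_real, Real.norm_of_nonneg (P.ap_nonneg i)]
      exact div_le_div_of_nonneg_left (mul_nonneg (P.ap_nonneg i) (norm_nonneg _)) hδ (hδ1 u hu i)
    have e4 := (hε1 u hu).2.1 i
    have := prod_bd (prod_bd (le_exp_sub e1) (le_exp_sub e2)) (prod_bd (le_exp_sub e3) (le_exp_sub e4))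
    have hf : fac P i u = ((1 + (P.bp i : ℂ) * u) * (1 + (P.bm i : ℂ) / u)) *
        ((1 - (P.ap i : ℂ) * u)⁻¹ * (1 - (P.am i : ℂ) / u)⁻¹) := by
      rw [← mul_inv, ← div_eq_mul_inv]; rfl
    rw [hf]
    refine this.trans (sub_le_sub_right (Real.exp_le_exp.2 ?_) _)
    have a1 := P.ap_nonneg i
    have a2 := P.am_nonneg i
    have a3 := P.bp_nonneg i
    have a4 := P.bm_nonneg i
    have a5 := norm_nonneg u
    have d1 : 0 < 1 / δ := by positivity
    have d2 : 0 < 1 / ε := by positivity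
    have d3 : 0 ≤ P.cm / ε := by positivity
    have r1 : P.bm i / ε = P.bm i * (1 / ε) := by ring
    have r2 : P.am i / ε = P.am i * (1 / ε) := by ring
    have r3 : P.ap i * ‖u‖ / δ = P.ap i * ‖u‖ * (1 / δ) := by ring
    rw [r1, r2, r3]
    unfold ss
    generalize 1 / δ = d at *
    generalize 1 / ε = e at *
    generalize P.cm / ε = c at *
    generalize ‖u‖ = n at *
    have b1 : P.bp i * n ≤ (1 + d + e + c) * (1 + n) * P.bp i := by
      have : n ≤ (1 + d + e + c) * (1 + n) := by nlinarith [mul_nonneg d1.le a5, mul_nonneg d2.le a5, mul_nonneg d3 a5]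
      nlinarith
    have b2 : P.bm i * e ≤ (1 + d + e + c) * (1 + n) * P.bm i := by
      have : e ≤ (1 + d + e + c) * (1 + n) := by nlinarith [mul_nonneg d1.le a5, mul_nonneg d2.le a5, mul_nonneg d3 a5]
      nlinarith
    have b3 : P.am i * e ≤ (1 + d + e + c) * (1 + n) * P.am i := by
      have : e ≤ (1 + d + e + c) * (1 + n) := by nlinarith [mul_nonneg d1.le a5, mul_nonneg d2.le a5, mul_nonneg d3 a5]
      nlinarith
    have b4 : P.ap i * n * d ≤ (1 + d + e + c) * (1 + n) * P.ap i := by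
      have : n * d ≤ (1 + d + e + c) * (1 + n) := by nlinarith [mul_nonneg d1.le a5, mul_nonneg d2.le a5, mul_nonneg d3 a5]
      nlinarith
    linarith
  · have := (hε1 u hu).2.2
    have : 0 < 1 / δ := by positivity
    have : 0 < 1 / ε := by positivity
    linarith

lemma exp_sub_one_le {p q : ℝ} (hp : 0 ≤ p) (hpq : p ≤ q) : Real.exp p - 1 ≤ p * Real.exp q := by
  have h1 : Real.exp p ≤ Real.exp q := Real.exp_le_exp.2 hpq
  have h2 := Real.add_one_le_exp (-p)
  have h3 : Real.exp (-p) * Real.exp p = 1 := by rw [← Real.exp_add]; simp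
  nlinarith [Real.exp_pos p]

lemma summable_bd (P : AWParams) {c : ℝ} (hc : 0 ≤ c) :
    Summable fun i => Real.exp (c * ss P i) - 1 := by
  have hs : Summable (ss P) := P.sum_fin
  refine Summable.of_nonneg_of_le (fun i => ?_) (fun i => ?_)
    ((hs.mul_left c).mul_right (Real.exp (c * ∑' j, ss P j)))
  · have := Real.one_le_exp (mul_nonneg hc (ss_nonneg P i))
    linarith
  · apply exp_sub_one_le (mul_nonneg hc (ss_nonneg P i))
    exact mul_le_mul_of_nonneg_left (hs.le_tsum i fun j _ => ss_nonneg P j) hc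

lemma mult_fac {P : AWParams} {a : ℝ} (h : Good P a) {u : ℂ} (hu : mm u ≤ a) :
    Multipliable fun i => fac P i u := by
  obtain ⟨K, hK, hb⟩ := fac_bound h
  have := multipliable_one_add_of_summable (f := fun i => fac P i u - 1)
    (Summable.of_nonneg_of_le (fun i => norm_nonneg _) (hb u hu).1
      (summable_bd P (by positivity)))
  simpa using this

lemma Phi_eq (P : AWParams) (z : ℂ) : P.Phi z =
    Complex.exp ((P.cp : ℂ) * z + (P.cm : ℂ) / z) * ∏' i, fac P i z := rfl

lemma Phi_bound {P : AWParams} {a : ℝ} (h : Good P a) :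
    ∃ K : ℝ, 0 ≤ K ∧ ∀ u, mm u ≤ a → ‖P.Phi u‖ ≤ Real.exp (K * (1 + ‖u‖)) := by
  obtain ⟨K, hK, hb⟩ := fac_bound h
  have hs : Summable (ss P) := P.sum_fin
  have hS : 0 ≤ ∑' j, ss P j := tsum_nonneg (ss_nonneg P)
  have hcp := P.cp_nonneg
  refine ⟨P.cp + K + K * ∑' j, ss P j, by positivity, fun u hu => ?_⟩
  have hp : ‖∏' i, fac P i u‖ ≤ Real.exp (K * (1 + ‖u‖) * ∑' j, ss P j) := by
    have ht := ((mult_fac h hu).hasProd).norm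
    refine le_of_tendsto ht (Eventually.of_forall fun s => ?_)
    refine (Finset.prod_le_prod (g := fun i => Real.exp (K * (1 + ‖u‖) * ss P i))
      (fun _ _ => norm_nonneg _) fun i _ => ?_).trans ?_
    · have h1 := (hb u hu).1 i
      have := norm_add_le (fac P i u - 1) 1
      simp only [sub_add_cancel, norm_one] at this
      linarith
    · rw [← Real.exp_sum, Real.exp_le_exp, ← Finset.mul_sum]
      exact mul_le_mul_of_nonneg_left (hs.sum_le_tsum s fun j _ => ss_nonneg P j) (by positivity)
  rw [Phi_eq, norm_mul]
  have he : ‖Complex.exp ((P.cp : ℂ) * u + (P.cm : ℂ) / u)‖ ≤ Real.exp (P.cp * ‖u‖ + K) := by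
    rw [Complex.norm_exp, Real.exp_le_exp]
    refine (Complex.re_le_norm _).trans ((norm_add_le _ _).trans (add_le_add ?_ (hb u hu).2))
    rw [norm_mul, Complex.norm_real, Real.norm_of_nonneg hcp]
  refine (mul_le_mul he hp (norm_nonneg _) (Real.exp_pos _).le).trans ?_
  rw [← Real.exp_add, Real.exp_le_exp]
  have := norm_nonneg u
  nlinarith [mul_nonneg hK this]

lemma continuous_mm : Continuous mm := by unfold mm; fun_prop

lemma isOpen_mm (a : ℝ) : IsOpen {u : ℂ | mm u < a} := isOpen_lt continuous_mm continuous_const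

lemma fac_diff {P : AWParams} {a : ℝ} (h : Good P a) (i : ℕ) {u : ℂ} (hu : mm u ≤ a) :
    DifferentiableAt ℂ (fac P i) u := by
  obtain ⟨h1, h2, h3⟩ := good_ne h hu i
  unfold fac
  rcases h3 with h3 | h3
  · exact DifferentiableAt.div (by fun_prop (disch := assumption)) (by fun_prop (disch := assumption))
      (mul_ne_zero h1 h2)
  · simp only [(h3.2 i).1, (h3.2 i).2, Complex.ofReal_zero, zero_div, add_zero, sub_zero, mul_one]
    exact DifferentiableAt.div (by fun_prop) (by fun_prop) h1

lemma Phi_diff {P : AWParams} {a : ℝ} (h : Good P a) :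
    DifferentiableOn ℂ P.Phi {u | mm u < a} := by
  obtain ⟨K, hK, hb⟩ := fac_bound h
  intro u hu
  apply DifferentiableAt.differentiableWithinAt
  have hu' : mm u < a := hu
  have hexp : DifferentiableAt ℂ (fun z => Complex.exp ((P.cp : ℂ) * z + (P.cm : ℂ) / z)) u := by
    rcases (good_ne h hu'.le 0).2.2 with h3 | h3
    · fun_prop (disch := assumption)
    · simp only [h3.1, Complex.ofReal_zero, zero_div, add_zero]
      fun_prop
  have hopen : IsOpen ({u : ℂ | mm u < a} ∩ Metric.ball 0 (‖u‖ + 1)) :=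
    (isOpen_mm a).inter Metric.isOpen_ball
  have hd : ∀ i, DifferentiableOn ℂ (fac P i) ({u : ℂ | mm u < a} ∩ Metric.ball 0 (‖u‖ + 1)) :=
    fun i z hz => (fac_diff h i (le_of_lt hz.1)).differentiableWithinAt
  have hpr := Summable.hasProdLocallyUniformlyOn_one_add (f := fun i z => fac P i z - 1)
    hopen (summable_bd P (c := K * (1 + (‖u‖ + 1))) (by positivity))
    (Eventually.of_forall fun i z hz => by
      refine ((hb z (le_of_lt hz.1)).1 i).trans (sub_le_sub_right (Real.exp_le_exp.2 ?_) _)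
      have hz2 : ‖z‖ < ‖u‖ + 1 := by simpa using hz.2
      have := ss_nonneg P i
      gcongr)
    (fun i => ((hd i).sub_const _).continuousOn)
  simp only [add_sub_cancel] at hpr
  have hdp : DifferentiableOn ℂ (fun z => ∏' i, fac P i z)
      ({u : ℂ | mm u < a} ∩ Metric.ball 0 (‖u‖ + 1)) := by
    refine (hasProdLocallyUniformlyOn_iff_tendstoLocallyUniformlyOn.1 hpr).differentiableOn
      (Eventually.of_forall fun s => ?_) hopen
    exact DifferentiableOn.fun_finsetProd fun i _ => hd i
  have hdu := hdp.differentiableAt (hopen.mem_nhds ⟨hu, by simp⟩)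
  exact hexp.mul hdu

lemma Phi_mul_swap {P : AWParams} {a b : ℝ} (h : Good P a) (h' : Good P.swap b) {u : ℂ}
    (hu : mm u ≤ a) (hu' : mm (-u) ≤ b) : P.Phi u * P.swap.Phi (-u) = 1 := by
  rw [Phi_eq, Phi_eq]
  have hm := Multipliable.tprod_mul (mult_fac h hu) (mult_fac h' hu')
  have h1 : ∀ i, fac P i u * fac P.swap i (-u) = 1 := by
    intro i
    obtain ⟨h1, h2, -⟩ := good_ne h hu i
    obtain ⟨h3, h4, -⟩ := good_ne h' hu' i
    unfold fac
    simp only [AWParams.swap] at h3 h4 ⊢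
    simp only [mul_neg, div_neg, sub_neg_eq_add, ← sub_eq_add_neg] at h3 h4 ⊢
    rw [div_mul_div_comm, div_eq_one_iff_eq (mul_ne_zero (mul_ne_zero h1 h2) (mul_ne_zero h3 h4))]
    ring
  simp only [h1, tprod_one] at hm
  have : P.swap.cp = P.cp := rfl
  have : P.swap.cm = P.cm := rfl
  calc _ = (Complex.exp ((P.cp : ℂ) * u + (P.cm : ℂ) / u) *
      Complex.exp ((P.cp : ℂ) * (-u) + (P.cm : ℂ) / (-u))) *
      ((∏' i, fac P i u) * ∏' i, fac P.swap i (-u)) := by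
        simp only [AWParams.swap]; ring
    _ = 1 := by
      rw [← hm, ← Complex.exp_add]
      rw [show (P.cp : ℂ) * u + (P.cm : ℂ) / u + ((P.cp : ℂ) * (-u) + (P.cm : ℂ) / (-u)) = 0 by
        rw [div_neg]; ring]
      simp


lemma gammaP_re (a y : ℝ) : (gammaP a y).re = a + |y| / Real.sqrt 2 := by
  unfold gammaP
  rw [show (y : ℂ) * Complex.I / ((Real.sqrt 2 : ℝ) : ℂ) = ((y / Real.sqrt 2 : ℝ) : ℂ) * Complex.I by
    push_cast; ring, ← Complex.ofReal_div, ← Complex.ofReal_add]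
  simp

lemma gammaP_im (a y : ℝ) : (gammaP a y).im = y / Real.sqrt 2 := by
  unfold gammaP
  rw [show (y : ℂ) * Complex.I / ((Real.sqrt 2 : ℝ) : ℂ) = ((y / Real.sqrt 2 : ℝ) : ℂ) * Complex.I by
    push_cast; ring, ← Complex.ofReal_div, ← Complex.ofReal_add]
  simp

lemma sqrt2_pos : 0 < Real.sqrt 2 := by positivity

lemma sqrt2_le : Real.sqrt 2 ≤ 2 := by
  rw [Real.sqrt_le_left (by norm_num)]; norm_num

lemma one_le_sqrt2 : 1 ≤ Real.sqrt 2 := by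
  rw [Real.one_le_sqrt]; norm_num

lemma mm_gammaP (a y : ℝ) : mm (gammaP a y) = a := by
  unfold mm
  rw [gammaP_re, gammaP_im, abs_div, abs_of_pos sqrt2_pos]
  ring

lemma continuous_gammaP (a : ℝ) : Continuous (gammaP a) := by
  unfold gammaP
  fun_prop

lemma gammaP_add (a t y : ℝ) : gammaP a y + (t : ℂ) = gammaP (a + t) y := by
  unfold gammaP; push_cast; ring

lemma gammaM_add (a t y : ℝ) : gammaM a y + (t : ℂ) = gammaM (a + t) y := by
  unfold gammaM; push_cast; ring

lemma gammaM_eq (b y : ℝ) : gammaM b y = -gammaP (-b) (-y) := by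
  unfold gammaM gammaP; rw [abs_neg]; push_cast; ring

lemma gammaMD_eq (y : ℝ) : gammaMD y = gammaPD (-y) := by
  unfold gammaMD gammaPD; rw [Real.sign_neg]; push_cast; ring

lemma gammaP_hasDerivAt (a : ℝ) {y : ℝ} (hy : y ≠ 0) : HasDerivAt (gammaP a) (gammaPD y) y := by
  have h1 : HasDerivAt (fun y : ℝ => |y|) (Real.sign y) y := by
    rcases lt_or_gt_of_ne hy with h | h
    · rw [Real.sign_of_neg h]; exact hasDerivAt_abs_neg h
    · rw [Real.sign_of_pos h]; exact hasDerivAt_abs_pos h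
  have h2 := h1.ofReal_comp
  have h3 := (hasDerivAt_id y).ofReal_comp
  have := ((h2.div_const ((Real.sqrt 2 : ℝ) : ℂ)).const_add (a : ℂ)).add
    ((h3.mul_const Complex.I).div_const ((Real.sqrt 2 : ℝ) : ℂ))
  convert! this using 1
  unfold gammaPD
  simp

lemma measurable_sign : Measurable Real.sign := by
  unfold Real.sign
  refine Measurable.ite measurableSet_Iio measurable_const ?_
  exact Measurable.ite measurableSet_Ioi measurable_const measurable_const

lemma measurable_gammaPD : Measurable gammaPD := by
  unfold gammaPD
  have := measurable_sign
  fun_prop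

lemma norm_gammaPD_le (y : ℝ) : ‖gammaPD y‖ ≤ 2 := by
  unfold gammaPD
  refine (norm_add_le _ _).trans ?_
  rw [norm_div, norm_div, Complex.norm_real, Complex.norm_real, Complex.norm_I,
    Real.norm_of_nonneg sqrt2_pos.le]
  have h1 : ‖Real.sign y‖ ≤ 1 := by
    rcases Real.sign_apply_eq y with h | h | h <;> simp [h]
  have := one_le_sqrt2
  have h2 : ‖Real.sign y‖ / Real.sqrt 2 ≤ 1 := by
    rw [div_le_one sqrt2_pos]; linarith
  have h3 : 1 / Real.sqrt 2 ≤ 1 := by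
    rw [div_le_one sqrt2_pos]; linarith
  linarith

lemma ii_gammaPD {φ : ℝ → ℂ} (hφ : Continuous φ) (a b : ℝ) :
    IntervalIntegrable (fun y => φ y * gammaPD y) volume a b := by
  have h : IntervalIntegrable gammaPD volume a b :=
    (intervalIntegrable_const (c := (2 : ℝ))).mono_fun measurable_gammaPD.aestronglyMeasurable
      (Eventually.of_forall fun y => by
        simpa using norm_gammaPD_le y)
  exact h.continuousOn_mul hφ.continuousOn

/-- FTC along `Γ_A^+`. -/
lemma ftcP {A : ℝ} {G H : ℂ → ℂ} (hG : Continuous fun y => G (gammaP A y))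
    (hH : ∀ y, HasDerivAt H (G (gammaP A y)) (gammaP A y)) (a b : ℝ) :
    ∫ y in a..b, G (gammaP A y) * gammaPD y = H (gammaP A b) - H (gammaP A a) := by
  refine MeasureTheory.integral_eq_of_hasDerivAt_off_countable (fun y => H (gammaP A y)) _
    (Set.countable_singleton (0 : ℝ)) ?_ ?_ (ii_gammaPD hG a b)
  · apply Continuous.continuousOn
    rw [continuous_iff_continuousAt]
    intro y
    exact (hH y).continuousAt.comp (continuous_gammaP A).continuousAt
  · intro y hy
    exact (hH y).scomp y (gammaP_hasDerivAt A (by simpa using hy.2)) |>.congr_deriv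
      (by simp [mul_comm])

lemma exists_primitive {a0 : ℝ} {G : ℂ → ℂ} (hG : DifferentiableOn ℂ G {u | mm u < a0}) :
    ∃ H : ℂ → ℂ, ∀ u, mm u < a0 → HasDerivAt H (G u) u := by
  classical
  set D1 : Set ℂ := {u | u.re - u.im < a0} with hD1
  set D2 : Set ℂ := {u | u.re + u.im < a0} with hD2
  have o1 : IsOpen D1 := isOpen_lt (by fun_prop) continuous_const
  have o2 : IsOpen D2 := isOpen_lt (by fun_prop) continuous_const
  have c1 : Convex ℝ D1 := convex_halfSpace_lt (f := fun u : ℂ => u.re - u.im)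
    ⟨by intros; simp; ring, by intros; simp; ring⟩ a0
  have c2 : Convex ℝ D2 := convex_halfSpace_lt (f := fun u : ℂ => u.re + u.im)
    ⟨by intros; simp; ring, by intros; simp; ring⟩ a0
  have s1 : D1 ⊆ {u | mm u < a0} := by
    intro u hu
    have := le_abs_self u.im
    simp only [hD1, Set.mem_ofPred_eq, mm] at hu ⊢
    linarith
  have s2 : D2 ⊆ {u | mm u < a0} := by
    intro u hu
    have := neg_abs_le u.im
    simp only [hD2, Set.mem_ofPred_eq, mm] at hu ⊢
    linarith
  obtain ⟨H1, h1⟩ := c1.exists_forall_hasDerivWithinAt (hG.mono s1)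
  obtain ⟨H2, h2⟩ := c2.exists_forall_hasDerivWithinAt (hG.mono s2)
  have h1' : ∀ u ∈ D1, HasDerivAt H1 (G u) u := fun u hu => (h1 u hu).hasDerivAt (o1.mem_nhds hu)
  have h2' : ∀ u ∈ D2, HasDerivAt H2 (G u) u := fun u hu => (h2 u hu).hasDerivAt (o2.mem_nhds hu)
  have hc : ∃ c, ∀ u ∈ D1 ∩ D2, H1 u = H2 u + c := by
    have hd : ∀ u ∈ D1 ∩ D2, HasDerivAt (fun u => H1 u - H2 u) 0 u := fun u hu =>
      ((h1' u hu.1).sub (h2' u hu.2)).congr_deriv (sub_self _)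
    have hp : ((a0 - 1 : ℝ) : ℂ) ∈ D1 ∩ D2 := by
      constructor <;> simp [hD1, hD2]
    refine ⟨H1 (a0 - 1 : ℝ) - H2 (a0 - 1 : ℝ), fun u hu => ?_⟩
    have := (o1.inter o2).is_const_of_deriv_eq_zero (c1.inter c2).isPreconnected
      (fun u hu => (hd u hu).differentiableAt.differentiableWithinAt)
      (fun u hu => (hd u hu).deriv) hu hp
    rw [← this]; ring
  obtain ⟨c, hc⟩ := hc
  refine ⟨fun u => if u ∈ D1 then H1 u else H2 u + c, fun u hu => ?_⟩
  by_cases hu1 : u ∈ D1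
  · refine (h1' u hu1).congr_of_eventuallyEq ?_
    filter_upwards [o1.mem_nhds hu1] with z hz
    simp [hz]
  · have hu2 : u ∈ D2 := by
      simp only [hD1, hD2, Set.mem_ofPred_eq, mm] at hu hu1 ⊢
      rcases abs_cases u.im with h | h <;> linarith [h.1]
    refine ((h2' u hu2).add_const c).congr_of_eventuallyEq ?_
    filter_upwards [o2.mem_nhds hu2] with z hz
    by_cases hz1 : z ∈ D1
    · simp [hz1, hc z ⟨hz1, hz⟩]
    · simp [hz1]

lemma contP {a0 A : ℝ} {G : ℂ → ℂ} (hA : A < a0) (hG : ContinuousOn G {u | mm u < a0}) :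
    Continuous fun y => G (gammaP A y) :=
  hG.comp_continuous (continuous_gammaP A) fun y => by simpa [mm_gammaP] using hA

lemma shift {a0 A A' C R : ℝ} {G : ℂ → ℂ} (hA' : A' ≤ A) (hA : A < a0)
    (hG : DifferentiableOn ℂ G {u | mm u < a0})
    (hb : ∀ u, A' ≤ mm u → mm u ≤ A → R ≤ |u.im| → ‖G u‖ ≤ C / |u.im|) :
    Tendsto (fun Y : ℝ => (∫ y in (-Y)..Y, G (gammaP A y) * gammaPD y) -
      ∫ y in (-Y)..Y, G (gammaP A' y) * gammaPD y) atTop (𝓝 0) := by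
  obtain ⟨H, hH⟩ := exists_primitive hG
  have key : ∀ y : ℝ, R ≤ |y| / Real.sqrt 2 →
      ‖H (gammaP A y) - H (gammaP A' y)‖ ≤ C / (|y| / Real.sqrt 2) * (A - A') := by
    intro y hy
    have hseg : ∀ x ∈ segment ℝ (gammaP A' y) (gammaP A y),
        A' ≤ mm x ∧ mm x ≤ A ∧ |x.im| = |y| / Real.sqrt 2 := by
      rintro x ⟨p, q, hp, hq, hpq, rfl⟩
      have e1 : (p • gammaP A' y + q • gammaP A y).im = y / Real.sqrt 2 := by
        simp [gammaP_im]; rw [← add_mul, hpq, one_mul]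
      have e2 : (p • gammaP A' y + q • gammaP A y).re = p * A' + q * A + |y| / Real.sqrt 2 := by
        simp [gammaP_re]; linear_combination (|y| / Real.sqrt 2) * hpq
      have e3 : |y / Real.sqrt 2| = |y| / Real.sqrt 2 := by
        rw [abs_div, abs_of_pos sqrt2_pos]
      have e4 : mm (p • gammaP A' y + q • gammaP A y) = p * A' + q * A := by
        unfold mm; rw [e1, e2, e3]; ring
      have hp' : p = 1 - q := by linarith
      subst hp'
      refine ⟨?_, ?_, by rw [e1, e3]⟩ <;> rw [e4] <;> nlinarith
    have := Convex.norm_image_sub_le_of_norm_hasDerivWithin_le (𝕜 := ℂ)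
      (f := H) (f' := G) (s := segment ℝ (gammaP A' y) (gammaP A y))
      (C := C / (|y| / Real.sqrt 2))
      (fun x hx => (hH x (lt_of_le_of_lt (hseg x hx).2.1 hA)).hasDerivWithinAt)
      (fun x hx => by
        obtain ⟨e1, e2, e3⟩ := hseg x hx
        rw [← e3]; exact hb x e1 e2 (by rw [e3]; exact hy))
      (convex_segment _ _) (left_mem_segment ℝ _ _) (right_mem_segment ℝ _ _)
    refine this.trans (le_of_eq ?_)
    congr 1
    have : gammaP A y - gammaP A' y = ((A - A' : ℝ) : ℂ) := by
      unfold gammaP; push_cast; ring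
    rw [this, Complex.norm_real, Real.norm_of_nonneg (by linarith)]
  have hA0 : A' < a0 := lt_of_le_of_lt hA' hA
  have e : ∀ Y : ℝ, (∫ y in (-Y)..Y, G (gammaP A y) * gammaPD y) -
      (∫ y in (-Y)..Y, G (gammaP A' y) * gammaPD y) =
      (H (gammaP A Y) - H (gammaP A' Y)) - (H (gammaP A (-Y)) - H (gammaP A' (-Y))) := by
    intro Y
    rw [ftcP (contP hA hG.continuousOn) (fun y => hH _ (by rw [mm_gammaP]; exact hA)),
      ftcP (contP hA0 hG.continuousOn) (fun y => hH _ (by rw [mm_gammaP]; exact hA0))]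
    ring
  simp only [e]
  have hlim : Tendsto (fun Y : ℝ => 2 * (C * Real.sqrt 2 * (A - A')) * Y⁻¹) atTop (𝓝 0) := by
    simpa using (tendsto_inv_atTop_zero (𝕜 := ℝ)).const_mul (2 * (C * Real.sqrt 2 * (A - A')))
  refine squeeze_zero_norm' ?_ hlim
  filter_upwards [eventually_ge_atTop (R * Real.sqrt 2), eventually_gt_atTop 0] with Y hY hY0
  have hR : R ≤ |Y| / Real.sqrt 2 := by
    rw [le_div_iff₀ sqrt2_pos, abs_of_pos hY0]; exact hY
  have k1 := key Y hR
  have k2 := key (-Y) (by rwa [abs_neg])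
  rw [abs_neg] at k2
  refine (norm_sub_le _ _).trans ((add_le_add k1 k2).trans (le_of_eq ?_))
  rw [abs_of_pos hY0]
  field_simp
  ring

lemma tendsto_gammaP_top (A : ℝ) : Tendsto (gammaP A) atTop (Bornology.cobounded ℂ) := by
  rw [← tendsto_norm_atTop_iff_cobounded]
  refine tendsto_atTop_mono (fun y => (le_abs_self _).trans (Complex.abs_im_le_norm (gammaP A y))) ?_
  simp only [gammaP_im]
  exact tendsto_id.atTop_div_const sqrt2_pos

lemma tendsto_gammaP_bot (A : ℝ) :
    Tendsto (fun y => gammaP A (-y)) atTop (Bornology.cobounded ℂ) := by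
  rw [← tendsto_norm_atTop_iff_cobounded]
  refine tendsto_atTop_mono (fun y => (neg_le_abs _).trans (Complex.abs_im_le_norm (gammaP A (-y)))) ?_
  simp only [gammaP_im, neg_div, neg_neg]
  exact tendsto_id.atTop_div_const sqrt2_pos

lemma ne_of_mm {u v : ℂ} (h : mm u ≠ mm v) : u - v ≠ 0 := by
  intro h0
  apply h
  rw [sub_eq_zero.1 h0]

lemma im_div_aux (x : ℂ) (s : ℝ) : (x / ((s : ℂ) - x)).im = s * x.im / Complex.normSq ((s : ℂ) - x) := by
  rw [Complex.div_im]; simp; ring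

lemma mm_add_real (v : ℂ) (s : ℝ) : mm (v + s) = mm v + s := by
  unfold mm; simp; ring

lemma tendsto_c_div {F : Filter ℝ} {g : ℝ → ℂ} (hg : Tendsto g F (Bornology.cobounded ℂ)) (N c : ℂ) :
    Tendsto (fun y => c / (N - g y)) F (𝓝 0) := by
  have h1 : Tendsto (fun y => N - g y) F (Bornology.cobounded ℂ) := by
    have := tendsto_const_sub_cobounded N
    exact this.comp hg
  have := (tendsto_inv₀_cobounded (α := ℂ)).comp h1
  simpa [div_eq_mul_inv] using this.const_mul c

lemma residue_in {A s : ℝ} {v : ℂ} (h1 : mm v < A) (h2 : A < mm v + s) :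
    Tendsto (fun Y : ℝ => ∫ y in (-Y)..Y,
      (1 / (gammaP A y - v) + 1 / (v + s - gammaP A y)) * gammaPD y) atTop
      (𝓝 (2 * Real.pi * Complex.I)) := by
  have hs : 0 < s := by linarith
  have n1 : ∀ y, gammaP A y - v ≠ 0 := fun y => ne_of_mm (by rw [mm_gammaP]; exact h1.ne')
  have n2 : ∀ y, v + s - gammaP A y ≠ 0 := fun y => ne_of_mm (by
    rw [mm_gammaP, mm_add_real]; exact h2.ne')
  have nn : ∀ y, (s : ℂ) - (gammaP A y - v) ≠ 0 := fun y => by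
    rw [show (s : ℂ) - (gammaP A y - v) = v + s - gammaP A y by ring]; exact n2 y
  have him : ∀ y, ((gammaP A y - v) / (v + s - gammaP A y)).im =
      s * (y / Real.sqrt 2 - v.im) / Complex.normSq (v + s - gammaP A y) := fun y => by
    have := im_div_aux (gammaP A y - v) s
    rw [show (s : ℂ) - (gammaP A y - v) = v + s - gammaP A y by ring] at this
    rw [this, Complex.sub_im, gammaP_im]
  have hsl : ∀ y, (gammaP A y - v) / (v + s - gammaP A y) ∈ Complex.slitPlane := by
    intro y
    rw [Complex.mem_slitPlane_iff]
    by_cases hy : y / Real.sqrt 2 = v.im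
    · left
      have e1 : (gammaP A y - v) = ((A - mm v : ℝ) : ℂ) := by
        apply Complex.ext
        · rw [Complex.sub_re, gammaP_re, Complex.ofReal_re]
          unfold mm
          rw [← hy, abs_div, abs_of_pos sqrt2_pos]; ring
        · rw [Complex.sub_im, gammaP_im, hy]; simp
      have e2 : v + s - gammaP A y = ((s - (A - mm v) : ℝ) : ℂ) := by
        rw [Complex.ofReal_sub, ← e1]; ring
      rw [e2, e1, ← Complex.ofReal_div, Complex.ofReal_re]
      exact div_pos (by linarith) (by linarith)
    · right
      rw [him]
      exact div_ne_zero (mul_ne_zero hs.ne' (sub_ne_zero.2 hy)) (by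
        rw [Ne, Complex.normSq_eq_zero]; exact n2 y)
  have hftc : ∀ Y : ℝ, ∫ y in (-Y)..Y,
      (1 / (gammaP A y - v) + 1 / (v + s - gammaP A y)) * gammaPD y =
      Complex.log ((gammaP A Y - v) / (v + s - gammaP A Y)) -
      Complex.log ((gammaP A (-Y) - v) / (v + s - gammaP A (-Y))) := by
    intro Y
    refine ftcP (G := fun u => 1 / (u - v) + 1 / (v + s - u))
      (H := fun u => Complex.log ((u - v) / (v + s - u))) ?_ ?_ _ _
    · have := continuous_gammaP A
      exact (continuous_const.div (by fun_prop) n1).add (continuous_const.div (by fun_prop) n2)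
    · intro y
      have d1 : HasDerivAt (fun u : ℂ => u - v) 1 (gammaP A y) := (hasDerivAt_id _).sub_const v
      have d2 : HasDerivAt (fun u : ℂ => v + s - u) (-1) (gammaP A y) :=
        (hasDerivAt_id _).const_sub _
      refine ((d1.div d2 (n2 y)).clog (hsl y)).congr_deriv ?_
      have := n1 y
      have := n2 y
      simp only [Pi.div_apply]
      field_simp
      ring
  simp only [hftc]
  have hw : ∀ y, (gammaP A y - v) / (v + s - gammaP A y) = -1 + s / (v + s - gammaP A y) := by
    intro y
    have := n2 y
    field_simp
    ring
  have t1 : Tendsto (fun Y => (gammaP A Y - v) / (v + s - gammaP A Y)) atTop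
      (𝓝[{z : ℂ | 0 ≤ z.im}] (-1)) := by
    rw [tendsto_nhdsWithin_iff]
    constructor
    · simp only [hw]
      simpa using (tendsto_c_div (tendsto_gammaP_top A) (v + s) s).const_add (-1)
    · filter_upwards [eventually_ge_atTop (v.im * Real.sqrt 2)] with Y hY
      simp only [Set.mem_ofPred_eq, him]
      have : v.im ≤ Y / Real.sqrt 2 := by rwa [le_div_iff₀ sqrt2_pos]
      exact div_nonneg (mul_nonneg hs.le (by linarith)) (Complex.normSq_nonneg _)
  have t2 : Tendsto (fun Y => (gammaP A (-Y) - v) / (v + s - gammaP A (-Y))) atTop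
      (𝓝[{z : ℂ | z.im < 0}] (-1)) := by
    rw [tendsto_nhdsWithin_iff]
    constructor
    · simp only [hw]
      simpa using (tendsto_c_div (tendsto_gammaP_bot A) (v + s) s).const_add (-1)
    · filter_upwards [eventually_gt_atTop (-v.im * Real.sqrt 2)] with Y hY
      simp only [Set.mem_ofPred_eq, him]
      have : -Y / Real.sqrt 2 < v.im := by rw [div_lt_iff₀ sqrt2_pos]; linarith
      refine div_neg_of_neg_of_pos (mul_neg_of_pos_of_neg hs (by linarith)) ?_
      rw [Complex.normSq_pos]; exact n2 _
  have l1 := (Complex.tendsto_log_nhdsWithin_im_nonneg_of_re_neg_of_im_zero (z := -1)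
    (by simp) (by simp)).comp t1
  have l2 := (Complex.tendsto_log_nhdsWithin_im_neg_of_re_neg_of_im_zero (z := -1)
    (by simp) (by simp)).comp t2
  have := l1.sub l2
  convert! this using 2
  simp
  ring

lemma residue_out {A s : ℝ} {v : ℂ} (h1 : A < mm v) (hs : 0 < s) :
    Tendsto (fun Y : ℝ => ∫ y in (-Y)..Y,
      (1 / (gammaP A y - v) + 1 / (v + s - gammaP A y)) * gammaPD y) atTop
      (𝓝 0) := by
  have n1 : ∀ y, gammaP A y - v ≠ 0 := fun y => ne_of_mm (by rw [mm_gammaP]; exact h1.ne)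
  have n2 : ∀ y, v + s - gammaP A y ≠ 0 := fun y => ne_of_mm (by
    rw [mm_gammaP, mm_add_real]; linarith)
  have n3 : ∀ y, gammaP A y - v - s ≠ 0 := fun y => by
    have := neg_ne_zero.2 (n2 y)
    rwa [show -(v + s - gammaP A y) = gammaP A y - v - s by ring] at this
  have him : ∀ y, ((gammaP A y - v) / (gammaP A y - v - s)).im =
      -(s * (y / Real.sqrt 2 - v.im) / Complex.normSq (v + s - gammaP A y)) := fun y => by
    have := im_div_aux (gammaP A y - v) s
    rw [show (s : ℂ) - (gammaP A y - v) = v + s - gammaP A y by ring] at this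
    rw [show (gammaP A y - v) / (gammaP A y - v - s) = -((gammaP A y - v) / (v + s - gammaP A y)) by
      rw [← div_neg]; congr 1; ring]
    rw [Complex.neg_im, this, Complex.sub_im, gammaP_im]
  have hsl : ∀ y, (gammaP A y - v) / (gammaP A y - v - s) ∈ Complex.slitPlane := by
    intro y
    rw [Complex.mem_slitPlane_iff]
    by_cases hy : y / Real.sqrt 2 = v.im
    · left
      have e1 : (gammaP A y - v) = ((A - mm v : ℝ) : ℂ) := by
        apply Complex.ext
        · rw [Complex.sub_re, gammaP_re, Complex.ofReal_re]
          unfold mm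
          rw [← hy, abs_div, abs_of_pos sqrt2_pos]; ring
        · rw [Complex.sub_im, gammaP_im, hy]; simp
      rw [e1, ← Complex.ofReal_sub, ← Complex.ofReal_div, Complex.ofReal_re]
      exact div_pos_of_neg_of_neg (by linarith) (by linarith)
    · right
      rw [him]
      exact neg_ne_zero.2 (div_ne_zero (mul_ne_zero hs.ne' (sub_ne_zero.2 hy)) (by
        rw [Ne, Complex.normSq_eq_zero]; exact n2 y))
  have hftc : ∀ Y : ℝ, ∫ y in (-Y)..Y,
      (1 / (gammaP A y - v) + 1 / (v + s - gammaP A y)) * gammaPD y =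
      Complex.log ((gammaP A Y - v) / (gammaP A Y - v - s)) -
      Complex.log ((gammaP A (-Y) - v) / (gammaP A (-Y) - v - s)) := by
    intro Y
    refine ftcP (G := fun u => 1 / (u - v) + 1 / (v + s - u))
      (H := fun u => Complex.log ((u - v) / (u - v - s))) ?_ ?_ _ _
    · have := continuous_gammaP A
      exact (continuous_const.div (by fun_prop) n1).add (continuous_const.div (by fun_prop) n2)
    · intro y
      have d1 : HasDerivAt (fun u : ℂ => u - v) 1 (gammaP A y) := (hasDerivAt_id _).sub_const v
      have d2 : HasDerivAt (fun u : ℂ => u - v - s) 1 (gammaP A y) := d1.sub_const _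
      refine ((d1.div d2 (n3 y)).clog (hsl y)).congr_deriv ?_
      have m1 := n1 y
      have m3 := n3 y
      simp only [Pi.div_apply]
      rw [show v + s - gammaP A y = -(gammaP A y - v - s) by ring]
      generalize gammaP A y - v = x at *
      field_simp
      ring
  simp only [hftc]
  have hw : ∀ y, (gammaP A y - v) / (gammaP A y - v - s) = 1 + (-s) / (v + s - gammaP A y) := by
    intro y
    have m3 := n3 y
    rw [show v + s - gammaP A y = -(gammaP A y - v - s) by ring]
    field_simp
    ring
  have l0 : ContinuousAt Complex.log 1 := continuousAt_clog (by simp)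
  have t1 : Tendsto (fun Y => (gammaP A Y - v) / (gammaP A Y - v - s)) atTop (𝓝 1) := by
    simp only [hw]
    simpa using (tendsto_c_div (tendsto_gammaP_top A) (v + s) (-s)).const_add 1
  have t2 : Tendsto (fun Y => (gammaP A (-Y) - v) / (gammaP A (-Y) - v - s)) atTop (𝓝 1) := by
    simp only [hw]
    simpa using (tendsto_c_div (tendsto_gammaP_bot A) (v + s) (-s)).const_add 1
  have := (l0.tendsto.comp t1).sub (l0.tendsto.comp t2)
  simpa using this


lemma mm_sub_le (u v : ℂ) : |mm u - mm v| ≤ 2 * ‖u - v‖ := by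
  have h1 := Complex.abs_re_le_norm (u - v)
  have h2 := Complex.abs_im_le_norm (u - v)
  have h3 := abs_abs_sub_abs_le u.im v.im
  rw [Complex.sub_re] at h1
  rw [Complex.sub_im] at h2
  unfold mm
  have : u.re - |u.im| - (v.re - |v.im|) = (u.re - v.re) - (|u.im| - |v.im|) := by ring
  rw [this]
  have h4 := abs_sub (u.re - v.re) (|u.im| - |v.im|)
  linarith

lemma im_gammaP_bd (A y : ℝ) : (1 + (gammaP A y).im ^ 2)⁻¹ ≤ 2 * (1 + y ^ 2)⁻¹ := by
  rw [gammaP_im, div_pow, Real.sq_sqrt (by norm_num), ← div_eq_mul_inv, inv_eq_one_div,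
    div_le_div_iff₀ (by positivity) (by positivity)]
  nlinarith [sq_nonneg y]

/-- decay of `f` on the strip `A' ≤ mm ≤ A` -/
def Decay (f : ℂ → ℂ) (A' A C : ℝ) : Prop :=
  ∀ u, A' ≤ mm u → mm u ≤ A → ‖f u‖ ≤ C * (1 + u.im ^ 2)⁻¹

lemma Decay.nonneg {f : ℂ → ℂ} {A' A C : ℝ} (h : Decay f A' A C) (hA : A' ≤ A) : 0 ≤ C := by
  have := h (gammaP A 0) (by rw [mm_gammaP]; exact hA) (by rw [mm_gammaP])
  have h2 := (norm_nonneg _).trans this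
  by_contra hC
  have h3 : 0 < (1 + (gammaP A 0).im ^ 2)⁻¹ := by positivity
  nlinarith

lemma int1D {f : ℂ → ℂ} {A C : ℝ} {v : ℂ} (hf : Continuous fun y => f (gammaP A y))
    (hd : Decay f A A C) (hv : mm v ≠ A) :
    Integrable fun y => f (gammaP A y) / (gammaP A y - v) * gammaPD y := by
  have hC := hd.nonneg le_rfl
  have n1 : ∀ y, gammaP A y - v ≠ 0 := fun y => ne_of_mm (by rw [mm_gammaP]; exact hv.symm)
  have hcont : Continuous fun y => f (gammaP A y) / (gammaP A y - v) :=
    hf.div (by have := continuous_gammaP A; fun_prop) n1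
  have hpos : 0 < |A - mm v| / 2 := by
    have : 0 < |A - mm v| := abs_pos.2 (sub_ne_zero.2 hv.symm)
    linarith
  refine (integrable_inv_one_add_sq.const_mul (C * 2 / (|A - mm v| / 2) * 2)).mono'
    (hcont.aestronglyMeasurable.mul measurable_gammaPD.aestronglyMeasurable)
    (Eventually.of_forall fun y => ?_)
  rw [norm_mul, norm_div]
  have h1 := hd (gammaP A y) (by rw [mm_gammaP]) (by rw [mm_gammaP])
  have h2 := mm_sub_le (gammaP A y) v
  rw [mm_gammaP] at h2
  have h3 : |A - mm v| / 2 ≤ ‖gammaP A y - v‖ := by linarith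
  have h4 : ‖f (gammaP A y)‖ ≤ C * (2 * (1 + y ^ 2)⁻¹) :=
    h1.trans (mul_le_mul_of_nonneg_left (im_gammaP_bd A y) hC)
  calc ‖f (gammaP A y)‖ / ‖gammaP A y - v‖ * ‖gammaPD y‖
      ≤ C * (2 * (1 + y ^ 2)⁻¹) / (|A - mm v| / 2) * 2 := by
        gcongr
        exact norm_gammaPD_le y
    _ = _ := by ring

lemma tendsto_int1D {f : ℂ → ℂ} {A C : ℝ} {v : ℂ} (hf : Continuous fun y => f (gammaP A y))
    (hd : Decay f A A C) (hv : mm v ≠ A) :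
    Tendsto (fun Y : ℝ => ∫ y in (-Y)..Y, f (gammaP A y) / (gammaP A y - v) * gammaPD y) atTop
      (𝓝 (∫ y, f (gammaP A y) / (gammaP A y - v) * gammaPD y)) :=
  MeasureTheory.intervalIntegral_tendsto_integral (int1D hf hd hv) tendsto_neg_atTop_atBot tendsto_id

lemma Decay.mono {f : ℂ → ℂ} {A' A C B' B : ℝ} (h : Decay f A' A C) (h1 : A' ≤ B') (h2 : B ≤ A) :
    Decay f B' B C := fun u hu hu' => h u (h1.trans hu) (hu'.trans h2)

lemma Decay.le {f : ℂ → ℂ} {A' A C : ℝ} (h : Decay f A' A C) (hA : A' ≤ A) (u : ℂ) (h1 : A' ≤ mm u)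
    (h2 : mm u ≤ A) : ‖f u‖ ≤ C := by
  have hC := h.nonneg hA
  refine (h u h1 h2).trans ?_
  have : (1 + u.im ^ 2)⁻¹ ≤ 1 := inv_le_one_of_one_le₀ (by nlinarith [sq_nonneg u.im])
  nlinarith

lemma im_half {u v : ℂ} (h : 2 * |v.im| + 1 ≤ |u.im|) : |u.im| / 2 ≤ ‖u - v‖ := by
  have h2 := Complex.abs_im_le_norm (u - v)
  rw [Complex.sub_im] at h2
  have := abs_sub_abs_le_abs_sub u.im v.im
  linarith

lemma jump_right {f : ℂ → ℂ} {A' A a0 C : ℝ} {v : ℂ} (hA' : A' ≤ A) (hA : A < a0)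
    (hf : DifferentiableOn ℂ f {u | mm u < a0}) (hd : Decay f A' A C) (hv : A < mm v) :
    (∫ y, f (gammaP A y) / (gammaP A y - v) * gammaPD y) =
      ∫ y, f (gammaP A' y) / (gammaP A' y - v) * gammaPD y := by
  have hC := hd.nonneg hA'
  have t1 := tendsto_int1D (contP hA hf.continuousOn) (hd.mono hA' le_rfl) hv.ne'
  have t2 := tendsto_int1D (contP (lt_of_le_of_lt hA' hA) hf.continuousOn) (hd.mono le_rfl hA')
    (lt_of_le_of_lt hA' hv).ne'
  have hG : DifferentiableOn ℂ (fun u => f u / (u - v)) {u | mm u < min a0 (mm v)} := by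
    refine DifferentiableOn.div (hf.mono fun u hu => ?_) (by fun_prop) fun u hu => ?_
    · have hu1 : mm u < min a0 (mm v) := hu
      exact lt_of_lt_of_le hu1 (min_le_left _ _)
    · have hu1 : mm u < min a0 (mm v) := hu
      exact ne_of_mm (lt_of_lt_of_le hu1 (min_le_right _ _)).ne
  have t3 := shift (C := 2 * C) (R := 2 * |v.im| + 1) hA' (lt_min hA hv) hG (fun u h1 h2 h3 => by
    have e1 := hd.le hA' u h1 h2
    have e2 := im_half h3
    have e3 : 0 < |u.im| := by have := abs_nonneg v.im; linarith
    rw [norm_div]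
    calc ‖f u‖ / ‖u - v‖ ≤ C / (|u.im| / 2) := by gcongr
      _ = _ := by field_simp)
  exact sub_eq_zero.1 (tendsto_nhds_unique (t1.sub t2) t3)

lemma jump_left {f : ℂ → ℂ} {A' A a0 C : ℝ} {v L L' : ℂ} (hA' : A' ≤ A) (hA : A < a0)
    (hf : DifferentiableOn ℂ f {u | mm u < a0}) (hd : Decay f A' A C) (hv : mm v < A)
    (hv' : mm v ≠ A')
    (hL : Tendsto (fun Y : ℝ => ∫ y in (-Y)..Y,
      (1 / (gammaP A y - v) + 1 / (v + (a0 - mm v : ℝ) - gammaP A y)) * gammaPD y) atTop (𝓝 L))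
    (hL' : Tendsto (fun Y : ℝ => ∫ y in (-Y)..Y,
      (1 / (gammaP A' y - v) + 1 / (v + (a0 - mm v : ℝ) - gammaP A' y)) * gammaPD y) atTop (𝓝 L')) :
    (∫ y, f (gammaP A y) / (gammaP A y - v) * gammaPD y) -
      (∫ y, f (gammaP A' y) / (gammaP A' y - v) * gammaPD y) = f v * (L - L') := by
  have hC := hd.nonneg hA'
  set s : ℝ := a0 - mm v with hs
  have hs0 : 0 < s := by linarith
  have hA0 : A' < a0 := lt_of_le_of_lt hA' hA
  have t1 := tendsto_int1D (contP hA hf.continuousOn) (hd.mono hA' le_rfl) hv.ne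
  have t2 := tendsto_int1D (contP hA0 hf.continuousOn) (hd.mono le_rfl hA') hv'
  have hN : ∀ u, mm u < a0 → v + s - u ≠ 0 := fun u hu => ne_of_mm (by
    rw [mm_add_real]; linarith)
  set F : ℂ → ℂ := fun u => f u - f v * (s / (v + s - u)) with hF
  have hFd : DifferentiableOn ℂ F {u | mm u < a0} := by
    refine hf.sub (DifferentiableOn.const_mul ?_ _)
    exact DifferentiableOn.div (by fun_prop) (by fun_prop) fun u hu => hN u hu
  have hFv : F v = 0 := by
    have : (s : ℂ) ≠ 0 := by exact_mod_cast hs0.ne'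
    simp [hF, this]
  have hvm : mm v < a0 := hv.trans hA
  have hG : DifferentiableOn ℂ (dslope F v) {u | mm u < a0} :=
    (Complex.differentiableOn_dslope ((isOpen_mm a0).mem_nhds hvm)).2 hFd
  have hGe : ∀ u, u ≠ v → dslope F v u = F u / (u - v) := fun u hu => by
    rw [dslope_of_ne _ hu, slope_def_field, hFv, sub_zero]
  have t3 := shift (C := 2 * (C + ‖f v‖ * (s / (1 / 2)))) (R := 2 * |v.im| + 1) hA' hA hG
    (fun u h1 h2 h3 => by
      have e1 := hd.le hA' u h1 h2
      have e2 := im_half h3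
      have e3 : 1 ≤ |u.im| := by have := abs_nonneg v.im; linarith
      have huv : u ≠ v := by
        intro h; rw [h] at e2 e3; simp at e2; linarith
      have e4 : |u.im| / 2 ≤ ‖v + s - u‖ := by
        rw [← norm_neg, neg_sub]
        apply im_half
        simpa using h3
      have e5 : 1 / 2 ≤ ‖v + s - u‖ := by linarith
      have e6 : ‖F u‖ ≤ C + ‖f v‖ * (s / (1 / 2)) := by
        refine (norm_sub_le _ _).trans (add_le_add e1 ?_)
        rw [norm_mul, norm_div, Complex.norm_real, Real.norm_of_nonneg hs0.le]
        gcongr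
      rw [hGe u huv, norm_div]
      calc ‖F u‖ / ‖u - v‖ ≤ (C + ‖f v‖ * (s / (1 / 2))) / (|u.im| / 2) := by gcongr
        _ = _ := by field_simp)
  have hsplit : ∀ B, B < a0 → mm v ≠ B → ∀ Y : ℝ,
      ∫ y in (-Y)..Y, dslope F v (gammaP B y) * gammaPD y =
      (∫ y in (-Y)..Y, f (gammaP B y) / (gammaP B y - v) * gammaPD y) - f v *
      ∫ y in (-Y)..Y, (1 / (gammaP B y - v) + 1 / (v + s - gammaP B y)) * gammaPD y := by
    intro B hB hvB Y
    have n1 : ∀ y, gammaP B y - v ≠ 0 := fun y => ne_of_mm (by rw [mm_gammaP]; exact hvB.symm)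
    have n2 : ∀ y, v + s - gammaP B y ≠ 0 := fun y => hN _ (by rw [mm_gammaP]; exact hB)
    have hcg := continuous_gammaP B
    rw [← intervalIntegral.integral_const_mul, ← intervalIntegral.integral_sub]
    · congr 1
      ext y
      have m1 := n1 y
      have m2 := n2 y
      rw [hGe _ (sub_ne_zero.1 m1)]
      have : F (gammaP B y) / (gammaP B y - v) = f (gammaP B y) / (gammaP B y - v) -
          f v * (1 / (gammaP B y - v) + 1 / (v + s - gammaP B y)) := by
        simp only [hF]
        rw [sub_div]
        congr 1
        field_simp
        ring
      rw [this]
      ring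
    · exact ii_gammaPD ((contP hB hf.continuousOn).div (by fun_prop) n1) _ _
    · apply IntervalIntegrable.const_mul
      exact ii_gammaPD ((continuous_const.div (by fun_prop) n1).add
        (continuous_const.div (by fun_prop) n2)) _ _
  simp only [hsplit A hA hv.ne, hsplit A' hA0 hv'] at t3
  have t4 := (t1.sub (hL.const_mul (f v))).sub (t2.sub (hL'.const_mul (f v)))
  have := tendsto_nhds_unique t4 t3
  linear_combination this

lemma jump {f : ℂ → ℂ} {A' A a0 C : ℝ} {v : ℂ} (hA' : A' ≤ A) (hA : A < a0)
    (hf : DifferentiableOn ℂ f {u | mm u < a0}) (hd : Decay f A' A C) (hv : mm v ≠ A)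
    (hv' : mm v ≠ A') :
    (∫ y, f (gammaP A y) / (gammaP A y - v) * gammaPD y) -
      (∫ y, f (gammaP A' y) / (gammaP A' y - v) * gammaPD y) =
      if A' < mm v ∧ mm v < A then 2 * Real.pi * Complex.I * f v else 0 := by
  rcases lt_or_gt_of_ne hv with h | h
  · have hL := residue_in (s := a0 - mm v) h (by linarith)
    rcases lt_or_gt_of_ne hv' with h' | h'
    · have hL' := residue_in (s := a0 - mm v) h' (by linarith)
      rw [jump_left hA' hA hf hd h hv' hL hL', if_neg (by rintro ⟨h1, -⟩; linarith)]
      simp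
    · have hL' := residue_out (s := a0 - mm v) h' (by linarith)
      rw [jump_left hA' hA hf hd h hv' hL hL', if_pos ⟨h', h⟩]
      ring
  · rw [jump_right hA' hA hf hd h, if_neg (by rintro ⟨-, h1⟩; linarith), sub_self]

def F1 (P : AWParams) (t x : ℝ) (u : ℂ) : ℂ :=
  Complex.exp ((u - t) ^ 3 / 3 - (x : ℂ) * (u - t)) * P.Phi u

lemma F1_diff {P : AWParams} {a : ℝ} (h : Good P a) (t x : ℝ) :
    DifferentiableOn ℂ (F1 P t x) {u | mm u < a} := by
  refine DifferentiableOn.mul ?_ (Phi_diff h)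
  fun_prop

lemma exp_neg_le {η : ℝ} (h : 0 ≤ η) : Real.exp (-η) ≤ 2 * (1 + η ^ 2)⁻¹ := by
  have := Real.quadratic_le_exp_of_nonneg h
  rw [Real.exp_neg, ← div_eq_mul_inv, inv_eq_one_div, div_le_div_iff₀ (Real.exp_pos _) (by positivity)]
  nlinarith

lemma F1_bound {P : AWParams} {A : ℝ} (h : Good P A) (t A' M : ℝ) :
    ∃ C : ℝ, ∀ x, |x| ≤ M → Decay (F1 P t x) A' A C := by
  obtain ⟨K, hK, hb⟩ := Phi_bound h
  set B := |A| + |A'| + |t| with hB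
  have hB0 : 0 ≤ B := by positivity
  set L := B ^ 2 + |M| + 2 * K + 1 with hL
  have hL1 : 1 ≤ L := by
    have := abs_nonneg M
    have := sq_nonneg B
    linarith
  refine ⟨Real.exp (B ^ 3 / 3 + |M| * B + K * (1 + B) + L * (L + 2)) * 2, fun x hx u h1 h2 => ?_⟩
  set η := |u.im| with hη
  have hη0 : 0 ≤ η := abs_nonneg _
  have hre : u.re = mm u + η := by unfold mm; ring
  have him : u.im ^ 2 = η ^ 2 := (sq_abs _).symm
  set m := mm u with hm
  have hmB : |m| ≤ |A| + |A'| := by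
    rw [abs_le]
    have := neg_abs_le A'
    have := le_abs_self A
    have := abs_nonneg A
    have := abs_nonneg A'
    constructor <;> linarith
  have hu : ‖u‖ ≤ B + 2 * η := by
    have := Complex.norm_le_abs_re_add_abs_im u
    have e := abs_add_le m η
    rw [← hre, abs_of_nonneg hη0] at e
    have := abs_nonneg t
    linarith
  have haB : |m - t| ≤ B := (abs_sub _ _).trans (by linarith)
  set a := m - t with ha
  have e1 : ((u - t) ^ 3 / 3 - (x : ℂ) * (u - t)).re = (a ^ 3 + 3 * a ^ 2 * η - 2 * η ^ 3) / 3 - x * (a + η) := by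
    have r1 : (u - t).re = a + η := by simp [hre, ha]; ring
    have r2 : (u - t).im = u.im := by simp
    have r3 : ((u - t) ^ 3 / 3).re = ((u - t).re ^ 3 - 3 * (u - t).re * (u - t).im ^ 2) / 3 := by
      rw [show (u - (t : ℂ)) ^ 3 / 3 = ((1 / 3 : ℝ) : ℂ) * (u - t) ^ 3 by push_cast; ring,
        Complex.re_ofReal_mul]
      generalize u - (t : ℂ) = z
      simp only [pow_succ, pow_zero, one_mul, Complex.mul_re, Complex.mul_im]
      ring
    rw [Complex.sub_re, r3, Complex.re_ofReal_mul, r1, r2, him]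
    ring
  have hcub : L * η - 2 / 3 * η ^ 3 ≤ L * (L + 2) := by
    rcases le_total η (L + 2) with hc | hc
    · have : 0 ≤ η ^ 3 := by positivity
      nlinarith
    · have q : L ≤ 2 / 3 * η ^ 2 := by nlinarith
      nlinarith [mul_le_mul_of_nonneg_right q hη0]
  have ha3 : a ^ 3 ≤ B ^ 3 := by
    refine (le_abs_self _).trans ?_
    rw [abs_pow]
    exact pow_le_pow_left₀ (abs_nonneg _) haB 3
  have ha2 : a ^ 2 ≤ B ^ 2 := by
    rw [← sq_abs]
    exact pow_le_pow_left₀ (abs_nonneg _) haB 2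
  have hxM : |x| ≤ |M| := hx.trans (le_abs_self M)
  have hxa : -(x * (a + η)) ≤ |M| * (B + η) := by
    refine (neg_le_abs _).trans ?_
    rw [abs_mul]
    refine mul_le_mul hxM ((abs_add_le _ _).trans ?_) (abs_nonneg _) (abs_nonneg _)
    rw [abs_of_nonneg hη0]; linarith
  have hfin : (a ^ 3 + 3 * a ^ 2 * η - 2 * η ^ 3) / 3 - x * (a + η) + K * (1 + ‖u‖) ≤
      (B ^ 3 / 3 + |M| * B + K * (1 + B) + L * (L + 2)) + -η := by
    have k1 : K * (1 + ‖u‖) ≤ K * (1 + (B + 2 * η)) := by gcongr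
    have k2 : a ^ 2 * η ≤ B ^ 2 * η := by gcongr
    have k3 : L * η = B ^ 2 * η + |M| * η + 2 * K * η + η := by rw [hL]; ring
    have k4 : K * (1 + (B + 2 * η)) = K * (1 + B) + 2 * K * η := by ring
    have k5 : |M| * (B + η) = |M| * B + |M| * η := by ring
    have k6 : (a ^ 3 + 3 * a ^ 2 * η - 2 * η ^ 3) / 3 = a ^ 3 / 3 + a ^ 2 * η - 2 / 3 * η ^ 3 := by ring
    rw [k6]
    linarith only [k1, k2, k3, k4, k5, hxa, hcub, ha3]
  unfold F1
  rw [norm_mul, Complex.norm_exp, e1]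
  calc _ ≤ Real.exp ((a ^ 3 + 3 * a ^ 2 * η - 2 * η ^ 3) / 3 - x * (a + η)) * Real.exp (K * (1 + ‖u‖)) := by
        gcongr
        exact hb u h2
    _ ≤ Real.exp ((B ^ 3 / 3 + |M| * B + K * (1 + B) + L * (L + 2)) + -η) := by
        rw [← Real.exp_add]; exact Real.exp_le_exp.2 hfin
    _ ≤ _ := by
        rw [Real.exp_add, mul_assoc, him]
        gcongr
        exact exp_neg_le hη0


lemma Phi_inv {P : AWParams} {b : ℝ} (h : Good P.swap b) {v : ℂ} (hv : mm (-v) ≤ b)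
    (hi : v.im ≠ 0) : (P.Phi v)⁻¹ = P.swap.Phi (-v) := by
  have hv0 : v ≠ 0 := by rintro rfl; simp at hi
  obtain ⟨K, hK, hb⟩ := fac_bound h
  have hs : Summable fun i => ‖fac P.swap i (-v) - 1‖ :=
    Summable.of_nonneg_of_le (fun i => norm_nonneg _) (hb (-v) hv).1
      (summable_bd P.swap (by positivity))
  have hinv : ∀ i, fac P i v = (fac P.swap i (-v))⁻¹ := by
    intro i
    unfold fac
    rw [inv_div]
    simp only [AWParams.swap, mul_neg, div_neg, sub_neg_eq_add, ← sub_eq_add_neg]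
  have hlin : ∀ r : ℝ, (1 - (r : ℂ) * v) ≠ 0 := by
    intro r h0
    have h1 := congrArg Complex.im h0
    have h2 := congrArg Complex.re h0
    simp [hi] at h1
    simp [h1] at h2
  have hlin2 : ∀ r : ℝ, (1 - (r : ℂ) / v) ≠ 0 := by
    intro r h0
    field_simp at h0
    have h1 := congrArg Complex.im h0
    simp [hi] at h1
  have hne : ∀ i, fac P.swap i (-v) ≠ 0 := by
    intro i
    obtain ⟨h3, h4, -⟩ := good_ne h hv i
    unfold fac
    refine div_ne_zero (mul_ne_zero ?_ ?_) (mul_ne_zero h3 h4)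
    · have := hlin (P.swap.bp i)
      simpa [← sub_eq_add_neg] using this
    · have := hlin2 (P.swap.bm i)
      simpa [div_neg, ← sub_eq_add_neg] using this
  have hp : ∏' i, fac P.swap i (-v) ≠ 0 := by
    have := tprod_one_add_ne_zero_of_summable (f := fun i => fac P.swap i (-v) - 1)
      (by simpa using hne) hs
    simpa using this
  have hprod := ((mult_fac h hv).hasProd.inv₀ hp).tprod_eq
  rw [Phi_eq, Phi_eq]
  simp only [hinv]
  rw [hprod, mul_inv, inv_inv, ← Complex.exp_neg]
  congr 2
  simp only [AWParams.swap, div_neg]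
  ring

/-- The symmetric form of the integrand. -/
def KK (P Q : AWParams) (t x s x' A B y₁ y₂ : ℝ) : ℂ :=
  F1 P t x (gammaP A y₁) * F1 Q s x' (gammaP B y₂) / (gammaP A y₁ + gammaP B y₂) *
    gammaPD y₁ * gammaPD y₂

lemma KK_symm (P Q : AWParams) (t x s x' A B y₁ y₂ : ℝ) :
    KK P Q t x s x' A B y₁ y₂ = KK Q P s x' t x B A y₂ y₁ := by
  unfold KK
  rw [add_comm (gammaP A y₁)]
  ring

lemma K3param_eq {P : AWParams} {α β t₁ t₂ : ℝ} (h : Good P.swap (-(β + t₂)))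
    (x₁ x₂ y₁ : ℝ) {y₂ : ℝ} (hy : y₂ ≠ 0) :
    K3param P α β t₁ x₁ t₂ x₂ y₁ y₂ =
      KK P P.swap t₁ x₁ (-t₂) x₂ (α + t₁) (-(β + t₂)) y₁ (-y₂) := by
  unfold K3param K3Integrand KK F1
  have e0 : gammaP (-(β + t₂)) (-y₂) = -gammaM (β + t₂) y₂ := by rw [gammaM_eq, neg_neg]
  have e1 := gammaP_add α t₁ y₁
  have e2 := gammaM_add β t₂ y₂
  have hmm : mm (-gammaM (β + t₂) y₂) ≤ -(β + t₂) := by rw [← e0, mm_gammaP]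
  have him : (gammaM (β + t₂) y₂).im ≠ 0 := by
    rw [gammaM_eq, Complex.neg_im, gammaP_im]
    have := sqrt2_pos
    simp only [ne_eq, neg_eq_zero, div_eq_zero_iff, not_or]
    exact ⟨by simpa using hy, this.ne'⟩
  rw [gammaMD_eq, e0, ← Phi_inv h hmm him, ← e1, ← e2, div_eq_mul_inv (P.Phi _)]
  have e3 : Complex.exp (gammaP α y₁ ^ 3 / 3 - x₁ * gammaP α y₁ - gammaM β y₂ ^ 3 / 3 + x₂ * gammaM β y₂)
    = Complex.exp ((gammaP α y₁ + t₁ - t₁) ^ 3 / 3 - x₁ * (gammaP α y₁ + t₁ - t₁)) *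
      Complex.exp ((-(gammaM β y₂ + t₂) - ((-t₂ : ℝ) : ℂ)) ^ 3 / 3 -
        x₂ * (-(gammaM β y₂ + t₂) - ((-t₂ : ℝ) : ℂ))) := by
    rw [← Complex.exp_add]
    congr 1
    push_cast
    ring
  rw [e3]
  rw [show gammaP α y₁ + (t₁ : ℂ) + -(gammaM β y₂ + t₂) = gammaP α y₁ + t₁ - gammaM β y₂ - t₂ by ring]
  ring

lemma norm_add_gammaP (A B y₁ y₂ : ℝ) :
    √|(|y₁| + (A + B) * √2 / 2)| * √|(|y₂| + (A + B) * √2 / 2)| ≤ ‖gammaP A y₁ + gammaP B y₂‖ := by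
  rw [← Real.sqrt_mul (abs_nonneg _), ← abs_mul]
  rw [Complex.norm_def]
  apply Real.sqrt_le_sqrt
  rw [Complex.normSq_apply, Complex.add_re, Complex.add_im, gammaP_re, gammaP_im, gammaP_re, gammaP_im]
  have h2 : √2 * √2 = (2 : ℝ) := Real.mul_self_sqrt (by norm_num)
  have hs := sqrt2_pos
  set p := |y₁| + (A + B) * √2 / 2 with hp
  set q := |y₂| + (A + B) * √2 / 2 with hq
  have e1 : A + |y₁| / √2 + (B + |y₂| / √2) = (p + q) / √2 := by
    rw [hp, hq]; field_simp; ring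
  have e2 : y₁ / √2 + y₂ / √2 = (y₁ + y₂) / √2 := by ring
  have e3 : (p - q) ^ 2 ≤ (y₁ + y₂) ^ 2 := by
    have : p - q = |y₁| - |y₂| := by rw [hp, hq]; ring
    rw [this, sub_sq, sq_abs, sq_abs, add_sq]
    have := neg_abs_le (y₁ * y₂)
    rw [abs_mul] at this
    linarith
  rw [e1, e2, div_mul_div_comm, div_mul_div_comm, h2]
  have : |p * q| ≤ p ^ 2 + q ^ 2 := by
    rw [abs_le]; constructor <;> nlinarith [sq_nonneg (p + q), sq_nonneg (p - q), sq_nonneg p, sq_nonneg q]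
  nlinarith

lemma int_sqrt_loc (e : ℝ) : Integrable fun y : ℝ =>
    (Set.Icc (-1 : ℝ) 1).indicator (fun y => (√|y|)⁻¹) (y + e) := by
  have h1 : IntervalIntegrable (fun x : ℝ => ((x : ℂ) ^ (((-1 / 2 : ℝ)) : ℂ))) volume (-1) 1 :=
    intervalIntegral.intervalIntegrable_cpow' (by simp; norm_num)
  have h2 : IntervalIntegrable (fun x : ℝ => (√|x|)⁻¹) volume (-1) 1 := by
    refine h1.norm.congr fun x hx => ?_
    rw [Complex.norm_cpow_real, Complex.norm_real, Real.norm_eq_abs, Real.sqrt_eq_rpow,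
      ← Real.rpow_neg (abs_nonneg _)]
    norm_num
  rw [intervalIntegrable_iff_integrableOn_Icc_of_le (by norm_num)] at h2
  have h3 := (integrable_indicator_iff measurableSet_Icc).2 h2
  exact h3.comp_add_right e

def psi (e y : ℝ) : ℝ := (1 + y ^ 2)⁻¹ * (√|(|y| + e)|)⁻¹

lemma measurable_psi (e : ℝ) : Measurable (psi e) := by
  unfold psi; fun_prop

lemma psi_nonneg (e y : ℝ) : 0 ≤ psi e y := by unfold psi; positivity

lemma int_psi (e : ℝ) : Integrable (psi e) := by
  have hb : ∀ c y : ℝ, (1 + y ^ 2)⁻¹ * (√|y + c|)⁻¹ ≤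
      (Set.Icc (-1 : ℝ) 1).indicator (fun y => (√|y|)⁻¹) (y + c) + (1 + y ^ 2)⁻¹ := by
    intro c y
    have h0 : 0 < (1 + y ^ 2)⁻¹ := by positivity
    have h1 : (1 + y ^ 2)⁻¹ ≤ 1 := inv_le_one_of_one_le₀ (by nlinarith [sq_nonneg y])
    by_cases hc : y + c ∈ Set.Icc (-1 : ℝ) 1
    · rw [Set.indicator_of_mem hc]
      have : 0 ≤ (√|y + c|)⁻¹ := by positivity
      nlinarith
    · rw [Set.indicator_of_notMem hc]
      have : (√|y + c|)⁻¹ ≤ 1 := by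
        apply inv_le_one_of_one_le₀
        rw [Real.one_le_sqrt]
        rw [Set.mem_Icc, ← abs_le] at hc
        linarith
      nlinarith
  have hi := ((int_sqrt_loc e).add integrable_inv_one_add_sq).add
    ((int_sqrt_loc (-e)).add integrable_inv_one_add_sq)
  refine hi.mono' (measurable_psi e).aestronglyMeasurable (Eventually.of_forall fun y => ?_)
  rw [Real.norm_of_nonneg (psi_nonneg e y)]
  have k1 := hb e y
  have k2 := hb (-e) y
  have n1 : 0 ≤ (1 + y ^ 2)⁻¹ * (√|y + e|)⁻¹ := by positivity
  have n2 : 0 ≤ (1 + y ^ 2)⁻¹ * (√|y + -e|)⁻¹ := by positivity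
  simp only [Pi.add_apply]
  unfold psi
  rcases le_total 0 y with hy | hy
  · rw [abs_of_nonneg hy]; linarith
  · rw [abs_of_nonpos hy, show -y + e = -(y + -e) by ring, abs_neg]; linarith

lemma KK_bound {P Q : AWParams} {A B : ℝ} (hP : Good P A) (hQ : Good Q B) (t s M : ℝ) :
    ∃ C : ℝ, ∀ x x' : ℝ, |x| ≤ M → |x'| ≤ M → ∀ y₁ y₂ : ℝ,
      |y₁| + (A + B) * √2 / 2 ≠ 0 → |y₂| + (A + B) * √2 / 2 ≠ 0 →
      ‖KK P Q t x s x' A B y₁ y₂‖ ≤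
        C * (psi ((A + B) * √2 / 2) y₁ * psi ((A + B) * √2 / 2) y₂) := by
  obtain ⟨C1, h1⟩ := F1_bound hP t A M
  obtain ⟨C2, h2⟩ := F1_bound hQ s B M
  refine ⟨(C1 * 2) * (C2 * 2) * 4, fun x x' hx hx' y₁ y₂ n1 n2 => ?_⟩
  have hC1 := (h1 x hx).nonneg le_rfl
  have hC2 := (h2 x' hx').nonneg le_rfl
  have b1 := h1 x hx (gammaP A y₁) (mm_gammaP A y₁).ge (mm_gammaP A y₁).le
  have b2 := h2 x' hx' (gammaP B y₂) (mm_gammaP B y₂).ge (mm_gammaP B y₂).le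
  have b1' : ‖F1 P t x (gammaP A y₁)‖ ≤ C1 * (2 * (1 + y₁ ^ 2)⁻¹) :=
    b1.trans (by gcongr; exact im_gammaP_bd A y₁)
  have b2' : ‖F1 Q s x' (gammaP B y₂)‖ ≤ C2 * (2 * (1 + y₂ ^ 2)⁻¹) :=
    b2.trans (by gcongr; exact im_gammaP_bd B y₂)
  have b3 := norm_add_gammaP A B y₁ y₂
  have d1 := norm_gammaPD_le y₁
  have d2 := norm_gammaPD_le y₂
  unfold KK psi
  set e := (A + B) * √2 / 2
  have p1 : 0 < √|(|y₁| + e)| := Real.sqrt_pos.2 (abs_pos.2 n1)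
  have p2 : 0 < √|(|y₂| + e)| := Real.sqrt_pos.2 (abs_pos.2 n2)
  rw [norm_mul, norm_mul, norm_div, norm_mul]
  calc _ ≤ (C1 * (2 * (1 + y₁ ^ 2)⁻¹)) * (C2 * (2 * (1 + y₂ ^ 2)⁻¹)) /
      (√|(|y₁| + e)| * √|(|y₂| + e)|) * 2 * 2 := by gcongr
    _ = _ := by
      rw [div_eq_mul_inv, mul_inv]; ring

lemma ae_ne (e : ℝ) : ∀ᵐ y : ℝ, |y| + e ≠ 0 := by
  have h1 : ∀ᵐ y : ℝ, y ≠ e := by simp [ae_iff, measure_singleton]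
  have h2 : ∀ᵐ y : ℝ, y ≠ -e := by simp [ae_iff, measure_singleton]
  filter_upwards [h1, h2] with y h1 h2 h
  rcases le_total 0 y with hy | hy
  · rw [abs_of_nonneg hy] at h; exact h2 (by linarith)
  · rw [abs_of_nonpos hy] at h; exact h1 (by linarith)

lemma ae_fst {p : ℝ → Prop} (h : ∀ᵐ y, p y) : ∀ᵐ z : ℝ × ℝ, p z.1 :=
  (Measure.quasiMeasurePreserving_fst (μ := (volume : Measure ℝ)) (ν := (volume : Measure ℝ))).ae h

lemma ae_snd {p : ℝ → Prop} (h : ∀ᵐ y, p y) : ∀ᵐ z : ℝ × ℝ, p z.2 :=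
  (Measure.quasiMeasurePreserving_snd (μ := (volume : Measure ℝ)) (ν := (volume : Measure ℝ))).ae h

lemma continuous_F1 {P : AWParams} {A : ℝ} (h : (A : EReal) < P.abar) (t x : ℝ) :
    Continuous fun y => F1 P t x (gammaP A y) := by
  obtain ⟨a0, h1, h2⟩ := exists_lt_abar h
  exact contP h1 (F1_diff (good_of_lt h2) t x).continuousOn

lemma measurable_KK {P Q : AWParams} {A B : ℝ} (hP : (A : EReal) < P.abar)
    (hQ : (B : EReal) < Q.abar) (t x s x' : ℝ) :
    Measurable fun p : ℝ × ℝ => KK P Q t x s x' A B p.1 p.2 := by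
  unfold KK
  have h1 := (continuous_F1 hP t x).measurable
  have h2 := (continuous_F1 hQ s x').measurable
  have h3 := (continuous_gammaP A).measurable
  have h4 := (continuous_gammaP B).measurable
  have h5 := measurable_gammaPD
  exact ((((h1.comp measurable_fst).mul (h2.comp measurable_snd)).div
    ((h3.comp measurable_fst).add (h4.comp measurable_snd))).mul (h5.comp measurable_fst)).mul
    (h5.comp measurable_snd)

lemma int_bound (C e : ℝ) : Integrable fun p : ℝ × ℝ => C * (psi e p.1 * psi e p.2) :=
  ((int_psi e).mul_prod (int_psi e)).const_mul C

lemma int_KK {P Q : AWParams} {A B : ℝ} (hP : (A : EReal) < P.abar)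
    (hQ : (B : EReal) < Q.abar) (t x s x' : ℝ) :
    Integrable fun p : ℝ × ℝ => KK P Q t x s x' A B p.1 p.2 := by
  obtain ⟨C, hC⟩ := KK_bound (good_of_lt hP) (good_of_lt hQ) t s (max |x| |x'|)
  refine (int_bound C ((A + B) * √2 / 2)).mono' (measurable_KK hP hQ t x s x').aestronglyMeasurable ?_
  filter_upwards [ae_fst (ae_ne _), ae_snd (ae_ne _)] with p h1 h2
  exact hC x x' (le_max_left _ _) (le_max_right _ _) _ _ h1 h2

lemma cont_KK {P Q : AWParams} {A B : ℝ} (hP : (A : EReal) < P.abar)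
    (hQ : (B : EReal) < Q.abar) (t s : ℝ) :
    Continuous fun xy : ℝ × ℝ => ∫ p : ℝ × ℝ, KK P Q t xy.1 s xy.2 A B p.1 p.2 := by
  rw [continuous_iff_continuousAt]
  intro z
  obtain ⟨C, hC⟩ := KK_bound (good_of_lt hP) (good_of_lt hQ) t s (max |z.1| |z.2| + 1)
  have hz1 : ∀ᶠ xy : ℝ × ℝ in 𝓝 z, |xy.1| < max |z.1| |z.2| + 1 :=
    (continuous_abs.comp continuous_fst).continuousAt.eventually_lt continuousAt_const
      (by have := le_max_left |z.1| |z.2|; simp only [Function.comp]; linarith)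
  have hz2 : ∀ᶠ xy : ℝ × ℝ in 𝓝 z, |xy.2| < max |z.1| |z.2| + 1 :=
    (continuous_abs.comp continuous_snd).continuousAt.eventually_lt continuousAt_const
      (by have := le_max_right |z.1| |z.2|; simp only [Function.comp]; linarith)
  refine continuousAt_of_dominated
    (Eventually.of_forall fun xy => (measurable_KK hP hQ t xy.1 s xy.2).aestronglyMeasurable) ?_
    (int_bound C ((A + B) * √2 / 2)) ?_
  · filter_upwards [hz1, hz2] with xy h1 h2
    filter_upwards [ae_fst (ae_ne _), ae_snd (ae_ne _)] with p k1 k2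
    exact hC _ _ h1.le h2.le _ _ k1 k2
  · refine Eventually.of_forall fun p => ?_
    unfold KK F1
    fun_prop

lemma ae_K3param {P : AWParams} {β t₂ : ℝ} (h : P.bbar < ((β + t₂ : ℝ) : EReal))
    (α t₁ x₁ x₂ : ℝ) :
    (fun p : ℝ × ℝ => K3param P α β t₁ x₁ t₂ x₂ p.1 p.2) =ᵐ[volume] fun p =>
      KK P P.swap t₁ x₁ (-t₂) x₂ (α + t₁) (-(β + t₂)) p.1 (-p.2) := by
  have h0 : ∀ᵐ y : ℝ, y ≠ 0 := by simp [ae_iff, measure_singleton]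
  filter_upwards [ae_snd h0] with p hp
  exact K3param_eq (good_of_lt (lt_swap_abar h)) x₁ x₂ p.1 hp

def negsnd : (ℝ × ℝ) ≃ᵐ (ℝ × ℝ) := MeasurableEquiv.prodCongr (MeasurableEquiv.refl ℝ) (MeasurableEquiv.neg ℝ)

lemma mp_negsnd : MeasurePreserving negsnd (volume : Measure (ℝ × ℝ)) volume :=
  (MeasurePreserving.id volume).prod (Measure.measurePreserving_neg volume)

lemma int_K3param {P : AWParams} {α β t₁ t₂ : ℝ} (hα : ((α + t₁ : ℝ) : EReal) < P.abar)
    (hβ : P.bbar < ((β + t₂ : ℝ) : EReal)) (x₁ x₂ : ℝ) :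
    Integrable (fun p : ℝ × ℝ => K3param P α β t₁ x₁ t₂ x₂ p.1 p.2) := by
  refine Integrable.congr ?_ (ae_K3param hβ α t₁ x₁ x₂).symm
  exact (mp_negsnd.integrable_comp_emb negsnd.measurableEmbedding).2
    (int_KK hα (lt_swap_abar hβ) t₁ x₁ (-t₂) x₂)

lemma K3_eq {P : AWParams} {β t₂ : ℝ} (hβ : P.bbar < ((β + t₂ : ℝ) : EReal)) (α t₁ x₁ x₂ : ℝ) :
    K3 P α β t₁ x₁ t₂ x₂ = (1 / (2 * (Real.pi : ℂ) * Complex.I)) ^ 2 *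
      ∫ p : ℝ × ℝ, KK P P.swap t₁ x₁ (-t₂) x₂ (α + t₁) (-(β + t₂)) p.1 p.2 := by
  unfold K3
  rw [integral_congr_ae (ae_K3param hβ α t₁ x₁ x₂)]
  congr 1
  exact mp_negsnd.integral_comp negsnd.measurableEmbedding
    (fun p : ℝ × ℝ => KK P P.swap t₁ x₁ (-t₂) x₂ (α + t₁) (-(β + t₂)) p.1 p.2)

lemma cont_K2 (t₁ t₂ : ℝ) : Continuous fun xy : ℝ × ℝ => K2 t₁ xy.1 t₂ xy.2 := by
  unfold K2
  split_ifs
  · fun_prop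
  · exact continuous_const

lemma cont_K1 (α β t₁ t₂ : ℝ) : Continuous fun xy : ℝ × ℝ => K1 α β t₁ xy.1 t₂ xy.2 := by
  unfold K1
  split_ifs
  · refine continuous_const.mul ?_
    apply intervalIntegral.continuous_parametric_intervalIntegral_of_continuous'
    unfold K1seg Function.uncurry
    fun_prop
  · exact continuous_const

lemma cont_Kabc {P : AWParams} {α β t₁ t₂ : ℝ} (hα : ((α + t₁ : ℝ) : EReal) < P.abar)
    (hβ : P.bbar < ((β + t₂ : ℝ) : EReal)) :
    Continuous (fun xy : ℝ × ℝ => KabcAt P α β t₁ xy.1 t₂ xy.2) := by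
  unfold KabcAt
  simp only [K3_eq hβ]
  exact ((cont_K1 α β t₁ t₂).add (cont_K2 t₁ t₂)).add
    (continuous_const.mul (cont_KK hα (lt_swap_abar hβ) t₁ (-t₂)))


/-- The entire exponential obtained by cancelling `Φ`. -/
def hh (t x s x' : ℝ) (v : ℂ) : ℂ :=
  Complex.exp ((v - t) ^ 3 / 3 - x * (v - t) + ((-v - s) ^ 3 / 3 - x' * (-v - s)))

lemma hh_diff (t x s x' : ℝ) : Differentiable ℂ (hh t x s x') := by
  unfold hh; fun_prop

lemma F1_mul {P : AWParams} {a b : ℝ} (h : Good P a) (h' : Good P.swap b) {v : ℂ}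
    (hv : mm v ≤ a) (hv' : mm (-v) ≤ b) (t x s x' : ℝ) :
    F1 P t x v * F1 P.swap s x' (-v) = hh t x s x' v := by
  unfold F1 hh
  have := Phi_mul_swap h h' hv hv'
  rw [Complex.exp_add]
  linear_combination (Complex.exp ((v - t) ^ 3 / 3 - x * (v - t)) *
    Complex.exp ((-v - s) ^ 3 / 3 - x' * (-v - s))) * this

lemma mm_neg_gammaP (B y : ℝ) : mm (-gammaP B y) = -B - √2 * |y| := by
  unfold mm
  rw [Complex.neg_re, Complex.neg_im, gammaP_re, gammaP_im, abs_neg, abs_div, abs_of_pos sqrt2_pos]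
  have h2 : √2 * √2 = (2 : ℝ) := Real.mul_self_sqrt (by norm_num)
  have hs := sqrt2_pos
  have e : √2 * |y| = |y| / √2 + |y| / √2 := by
    rw [← add_div, eq_div_iff hs.ne']
    linear_combination |y| * h2
  rw [e]
  ring

/-- Half-length of the crossing part. -/
def RR (A B : ℝ) : ℝ := max (B - A) 0 / √2

def DD (t x s x' A B : ℝ) : ℂ :=
  ∫ y in (-RR A B)..(RR A B), hh t x s x' (-gammaP (-B) y) * gammaPD y

lemma RR_nonneg (A B : ℝ) : 0 ≤ RR A B := div_nonneg (le_max_right _ _) sqrt2_pos.le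

lemma RR_anti {A' A : ℝ} (B : ℝ) (h : A' ≤ A) : RR A B ≤ RR A' B := by
  unfold RR
  have := sqrt2_pos
  gcongr

lemma K1_eq (α β t₁ x₁ t₂ x₂ : ℝ) : K1 α β t₁ x₁ t₂ x₂ =
    (1 / (2 * (Real.pi : ℂ) * Complex.I)) * DD t₁ x₁ (-t₂) x₂ (α + t₁) (β + t₂) := by
  unfold K1 DD
  split_ifs with h
  · congr 1
    obtain ⟨G, hG⟩ := (hh_diff t₁ x₁ (-t₂) x₂).isExactOn_univ
    have hG' : ∀ z, HasDerivAt G (hh t₁ x₁ (-t₂) x₂ z) z := fun z => hG z (Set.mem_univ _)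
    have hc : Continuous (hh t₁ x₁ (-t₂) x₂) := (hh_diff _ _ _ _).continuous
    have e2 := ftcP (A := -(β + t₂)) (G := fun u => hh t₁ x₁ (-t₂) x₂ (-u)) (H := fun u => -G (-u))
      (by have := continuous_gammaP (-(β + t₂)); fun_prop)
      (fun y => by
        have := (HasDerivAt.comp (gammaP (-(β + t₂)) y) (hG' (-gammaP (-(β + t₂)) y))
          (hasDerivAt_neg _)).fun_neg
        rw [mul_neg_one, neg_neg] at this
        exact this) (-RR (α + t₁) (β + t₂)) (RR (α + t₁) (β + t₂))
    rw [e2]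
    have hK : ∀ s : ℝ, HasDerivAt (K1seg α β t₁ t₂) Complex.I s := by
      intro s
      unfold K1seg
      have := ((Complex.ofRealCLM.hasDerivAt (x := s)).mul_const Complex.I).const_add
        (((α + t₁ + β + t₂) / 2 : ℝ) : ℂ)
      simpa using this
    have hKc : Continuous (K1seg α β t₁ t₂) := by unfold K1seg; fun_prop
    have e1 : ∀ r : ℝ, (∫ s in (-r)..r, hh t₁ x₁ (-t₂) x₂ (K1seg α β t₁ t₂ s) * Complex.I) =
        G (K1seg α β t₁ t₂ r) - G (K1seg α β t₁ t₂ (-r)) := by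
      intro r
      refine intervalIntegral.integral_eq_sub_of_hasDerivAt (f := fun s => G (K1seg α β t₁ t₂ s))
        (fun s _ => ?_) ?_
      · have := (hG' (K1seg α β t₁ t₂ s)).scomp_of_eq s (hK s) rfl
        simpa [Function.comp_def, mul_comm] using this
      · exact Continuous.intervalIntegrable (by fun_prop) _ _
    have hs := sqrt2_pos
    have h2 : √2 * √2 = (2 : ℝ) := Real.mul_self_sqrt (by norm_num)
    have hR : RR (α + t₁) (β + t₂) / √2 = (β + t₂ - (α + t₁)) / 2 := by
      unfold RR
      rw [max_eq_left (by linarith), div_div, h2]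
    have g1 : -gammaP (-(β + t₂)) (-RR (α + t₁) (β + t₂)) =
        K1seg α β t₁ t₂ ((β + t₂ - (α + t₁)) / 2) := by
      apply Complex.ext
      · rw [Complex.neg_re, gammaP_re, abs_neg, abs_of_nonneg (RR_nonneg _ _), hR]
        simp [K1seg]; ring
      · rw [Complex.neg_im, gammaP_im, neg_div, hR]
        simp [K1seg]
    have g2 : -gammaP (-(β + t₂)) (RR (α + t₁) (β + t₂)) =
        K1seg α β t₁ t₂ (-((β + t₂ - (α + t₁)) / 2)) := by
      apply Complex.ext
      · rw [Complex.neg_re, gammaP_re, abs_of_nonneg (RR_nonneg _ _), hR]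
        simp [K1seg]; ring
      · rw [Complex.neg_im, gammaP_im, hR]
        simp [K1seg]
    rw [g1, g2, sub_neg_eq_add, neg_add_eq_sub, ← e1]
    congr 1
    funext s
    unfold hh
    congr 2
    push_cast
    ring
  · have : RR (α + t₁) (β + t₂) = 0 := by
      unfold RR; rw [max_eq_right (by linarith)]; simp
    rw [this]; simp

lemma ind_eq {R R' y : ℝ} {z : ℂ} (hR : 0 ≤ R) (hRR : R ≤ R') (n1 : |y| ≠ R) (n2 : |y| ≠ R') :
    (if R < |y| ∧ |y| < R' then z else 0) =
      (Set.Ioc (-R') R').indicator (fun _ => z) y - (Set.Ioc (-R) R).indicator (fun _ => z) y := by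
  have key : ∀ r : ℝ, |y| ≠ r → (Set.Ioc (-r) r).indicator (fun _ => z) y = if |y| < r then z else 0 := by
    intro r hr
    rw [Set.indicator_apply]
    refine if_congr ?_ rfl rfl
    rw [Set.mem_Ioc, abs_lt]
    constructor
    · rintro ⟨h1, h2⟩
      refine ⟨h1, lt_of_le_of_ne h2 fun h => hr ?_⟩
      rw [h, abs_of_nonneg]
      linarith
    · rintro ⟨h1, h2⟩
      exact ⟨h1, h2.le⟩
  rw [key R n1, key R' n2]
  rcases lt_or_gt_of_ne n1 with h | h
  · simp [h, h.trans_le hRR, not_lt.2 h.le]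
  · simp [h, not_lt.2 h.le]

lemma DD_sub (t x s x' B : ℝ) {A' A : ℝ} (hA : A' ≤ A) :
    (∫ y, if A' < mm (-gammaP (-B) y) ∧ mm (-gammaP (-B) y) < A then
      hh t x s x' (-gammaP (-B) y) * gammaPD y else 0) = DD t x s x' A' B - DD t x s x' A B := by
  have hs := sqrt2_pos
  set φ : ℝ → ℂ := fun y => hh t x s x' (-gammaP (-B) y) * gammaPD y with hφ
  have hii : ∀ a b, IntervalIntegrable φ volume a b := ii_gammaPD (φ := fun y => hh t x s x' (-gammaP (-B) y))
    (by have := continuous_gammaP (-B); have := (hh_diff t x s x').continuous; fun_prop)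
  have hR := RR_nonneg A B
  have hR' := RR_nonneg A' B
  have hon : ∀ r, 0 ≤ r → Integrable ((Set.Ioc (-r) r).indicator φ) := fun r hr => by
    rw [integrable_indicator_iff measurableSet_Ioc]
    exact (intervalIntegrable_iff_integrableOn_Ioc_of_le (by linarith)).1 (hii _ _)
  have e : ∀ r, 0 ≤ r → ∫ y in (-r)..r, φ y = ∫ y, (Set.Ioc (-r) r).indicator φ y := fun r hr => by
    rw [intervalIntegral.integral_of_le (by linarith), MeasureTheory.integral_indicator measurableSet_Ioc]
  unfold DD
  rw [e _ hR, e _ hR', ← MeasureTheory.integral_sub (hon _ hR') (hon _ hR)]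
  refine integral_congr_ae ?_
  filter_upwards [ae_ne (-RR A B), ae_ne (-RR A' B), ae_ne 0] with y n1 n2 n3
  have n1' : |y| ≠ RR A B := fun h => n1 (by linarith)
  have n2' : |y| ≠ RR A' B := fun h => n2 (by linarith)
  have n3' : 0 < |y| := lt_of_le_of_ne (abs_nonneg _) fun h => n3 (by linarith)
  have := ind_eq (z := φ y) hR (RR_anti B hA) n1' n2'
  simp only [Set.indicator_apply] at this ⊢
  rw [← this]
  refine if_congr ?_ rfl rfl
  rw [mm_neg_gammaP, neg_neg]
  have c1 : A' < B - √2 * |y| ↔ |y| < RR A' B := by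
    unfold RR
    rw [lt_div_iff₀ hs, lt_max_iff]
    constructor
    · intro h; left; linarith
    · rintro (h | h)
      · linarith
      · exact absurd h (not_lt.2 (by positivity))
  have c2 : B - √2 * |y| < A ↔ RR A B < |y| := by
    unfold RR
    rw [div_lt_iff₀ hs, max_lt_iff]
    constructor
    · intro h; exact ⟨by linarith, by positivity⟩
    · intro h; linarith [h.1]
  rw [c1, c2, and_comm]

lemma KK_diff {P : AWParams} {A' A B : ℝ} (hA' : A' ≤ A) (hA : (A : EReal) < P.abar)
    (hB : ((-B : ℝ) : EReal) < P.swap.abar) (t x s x' : ℝ) :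
    (∫ p : ℝ × ℝ, KK P P.swap t x s x' A (-B) p.1 p.2) -
      (∫ p : ℝ × ℝ, KK P P.swap t x s x' A' (-B) p.1 p.2) =
      2 * Real.pi * Complex.I * (DD t x s x' A' B - DD t x s x' A B) := by
  have hA2 : (A' : EReal) < P.abar := lt_of_le_of_lt (by exact_mod_cast hA') hA
  have i1 := int_KK hA hB t x s x'
  have i2 := int_KK hA2 hB t x s x'
  rw [← DD_sub t x s x' B hA']
  rw [Measure.volume_eq_prod] at i1 i2 ⊢
  rw [integral_prod_symm _ i1, integral_prod_symm _ i2,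
    ← MeasureTheory.integral_sub i1.integral_prod_right i2.integral_prod_right, ← MeasureTheory.integral_const_mul]
  refine integral_congr_ae ?_
  obtain ⟨a0, ha0, ha0'⟩ := exists_lt_abar hA
  obtain ⟨C, hC⟩ := F1_bound (good_of_lt hA) t A' |x|
  filter_upwards [ae_ne ((A + B * (-1)) / √2), ae_ne ((A' + B * (-1)) / √2)] with y n1 n2
  have hs := sqrt2_pos
  have nn : ∀ a, |y| + (a + B * (-1)) / √2 ≠ 0 → mm (-gammaP (-B) y) ≠ a := by
    intro a h h'
    rw [mm_neg_gammaP] at h'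
    apply h
    field_simp
    linarith
  have hj := jump (v := -gammaP (-B) y) hA' ha0 (F1_diff (good_of_lt ha0') t x) (hC x le_rfl)
    (nn A n1) (nn A' n2)
  have hk : ∀ a, (∫ y₁, KK P P.swap t x s x' a (-B) y₁ y) =
      (F1 P.swap s x' (gammaP (-B) y) * gammaPD y) *
        ∫ y₁, F1 P t x (gammaP a y₁) / (gammaP a y₁ - -gammaP (-B) y) * gammaPD y₁ := by
    intro a
    rw [← MeasureTheory.integral_const_mul]
    congr 1
    funext y₁
    unfold KK
    rw [sub_neg_eq_add]
    ring
  simp only [hk]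
  rw [← mul_sub, hj]
  split_ifs with hc
  · have := F1_mul (good_of_lt hA) (good_of_lt hB) (v := -gammaP (-B) y) hc.2.le
      (by rw [neg_neg, mm_gammaP]) t x s x'
    rw [neg_neg] at this
    rw [← this]
    ring
  · simp

lemma indep_alpha_le {P : AWParams} {α' α β t₁ t₂ : ℝ} (h : α' ≤ α)
    (hα : ((α + t₁ : ℝ) : EReal) < P.abar) (hβ : P.bbar < ((β + t₂ : ℝ) : EReal)) (x₁ x₂ : ℝ) :
    KabcAt P α β t₁ x₁ t₂ x₂ = KabcAt P α' β t₁ x₁ t₂ x₂ := by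
  unfold KabcAt
  rw [K3_eq hβ, K3_eq hβ, K1_eq, K1_eq]
  have := KK_diff (A' := α' + t₁) (by linarith) hα (lt_swap_abar hβ) t₁ x₁ (-t₂) x₂
  have hpi : (2 * (Real.pi : ℂ) * Complex.I) ≠ 0 := by
    simp [Real.pi_ne_zero]
  rw [sub_eq_iff_eq_add] at this
  rw [this]
  generalize (∫ p : ℝ × ℝ, KK P P.swap t₁ x₁ (-t₂) x₂ (α' + t₁) (-(β + t₂)) p.1 p.2) = J
  field_simp
  ring

lemma indep_alpha {P : AWParams} {α' α β t₁ t₂ : ℝ}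
    (hα : ((α + t₁ : ℝ) : EReal) < P.abar) (hα' : ((α' + t₁ : ℝ) : EReal) < P.abar)
    (hβ : P.bbar < ((β + t₂ : ℝ) : EReal)) (x₁ x₂ : ℝ) :
    KabcAt P α β t₁ x₁ t₂ x₂ = KabcAt P α' β t₁ x₁ t₂ x₂ := by
  rcases le_total α' α with h | h
  · exact indep_alpha_le h hα hβ x₁ x₂
  · exact (indep_alpha_le h hα' hβ x₁ x₂).symm

lemma K1_symm (α β t₁ x₁ t₂ x₂ : ℝ) :
    K1 α β t₁ x₁ t₂ x₂ = K1 (-β) (-α) (-t₂) x₂ (-t₁) x₁ := by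
  unfold K1
  by_cases h : α + t₁ < β + t₂
  · rw [if_pos h, if_pos (by linarith)]
    congr 1
    rw [show -α + -t₁ - (-β + -t₂) = β + t₂ - (α + t₁) by ring]
    set r := (β + t₂ - (α + t₁)) / 2
    have := intervalIntegral.integral_comp_neg (a := -r) (b := r) (fun s : ℝ => Complex.exp
          (((t₂ - t₁ : ℝ) : ℂ) * (K1seg α β t₁ t₂ s) ^ 2 +
            ((t₁ ^ 2 - t₂ ^ 2 : ℝ) : ℂ) * K1seg α β t₁ t₂ s +
            K1seg α β t₁ t₂ s * ((x₂ - x₁ : ℝ) : ℂ) +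
            ((x₁ * t₁ - x₂ * t₂ - t₁ ^ 3 / 3 + t₂ ^ 3 / 3 : ℝ) : ℂ)) * Complex.I)
    rw [neg_neg] at this
    rw [← this]
    congr 1
    funext s
    congr 2
    unfold K1seg
    push_cast
    ring
  · rw [if_neg h, if_neg (by linarith)]

lemma K2_symm (t₁ x₁ t₂ x₂ : ℝ) : K2 t₁ x₁ t₂ x₂ = K2 (-t₂) x₂ (-t₁) x₁ := by
  unfold K2
  rw [show -t₁ - -t₂ = t₂ - t₁ by ring, show x₁ + x₂ = x₂ + x₁ by ring,
    show (x₁ - x₂) ^ 2 = (x₂ - x₁) ^ 2 by ring]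
  by_cases h : t₁ < t₂
  · rw [if_pos h, if_pos (by linarith)]
  · rw [if_neg h, if_neg (by linarith)]

lemma Kabc_symm {P : AWParams} {α β t₁ t₂ : ℝ} (hα : ((α + t₁ : ℝ) : EReal) < P.abar)
    (hβ : P.bbar < ((β + t₂ : ℝ) : EReal)) (x₁ x₂ : ℝ) :
    KabcAt P α β t₁ x₁ t₂ x₂ = KabcAt P.swap (-β) (-α) (-t₂) x₂ (-t₁) x₁ := by
  unfold KabcAt
  have hα' : P.swap.bbar < ((-α + -t₁ : ℝ) : EReal) := by
    apply bbar_lt_of_swap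
    rw [swap_swap]
    convert hα using 2
    ring
  rw [K3_eq hβ, K3_eq hα', swap_swap, ← K1_symm, ← K2_symm]
  congr 2
  rw [neg_neg, show -(-α + -t₁) = α + t₁ by ring, show -β + -t₂ = -(β + t₂) by ring]
  rw [Measure.volume_eq_prod, ← integral_prod_swap]
  congr 1
  funext p
  exact KK_symm _ _ _ _ _ _ _ _ _ _

lemma indep {P : AWParams} {α' α β β' t₁ t₂ : ℝ}
    (hα : ((α + t₁ : ℝ) : EReal) < P.abar) (hβ : P.bbar < ((β + t₂ : ℝ) : EReal))
    (hα' : ((α' + t₁ : ℝ) : EReal) < P.abar) (hβ' : P.bbar < ((β' + t₂ : ℝ) : EReal)) (x₁ x₂ : ℝ) :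
    KabcAt P α β t₁ x₁ t₂ x₂ = KabcAt P α' β' t₁ x₁ t₂ x₂ := by
  have k : ∀ b : ℝ, P.bbar < ((b + t₂ : ℝ) : EReal) →
      ((-b + -t₂ : ℝ) : EReal) < P.swap.abar := fun b hb => by
    have := lt_swap_abar hb
    convert this using 2
    ring
  have hα2 : P.swap.bbar < ((-α' + -t₁ : ℝ) : EReal) := by
    apply bbar_lt_of_swap
    rw [swap_swap]
    convert hα' using 2
    ring
  rw [indep_alpha hα hα' hβ, Kabc_symm hα' hβ, Kabc_symm hα' hβ',
    indep_alpha (k β hβ) (k β' hβ') hα2]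

/-- Lemma 1.4 (`WellDefKer`): (i) the double contour integral in `K³` converges
absolutely; (ii) the value of `K_{a,b,c}` does not depend on the admissible choice
of `α, β`; (iii) `(x₁, x₂) ↦ K_{a,b,c}(t₁,x₁;t₂,x₂)` is continuous. -/
theorem stmt0 (P : AWParams) (t₁ t₂ x₁ x₂ : ℝ) :
    (∀ α β : ℝ,
      ((α + t₁ : ℝ) : EReal) < P.abar → P.bbar < ((β + t₂ : ℝ) : EReal) →
      Integrable (fun p : ℝ × ℝ => K3param P α β t₁ x₁ t₂ x₂ p.1 p.2)
        (volume : Measure (ℝ × ℝ))) ∧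
    (∀ α β α' β' : ℝ,
      ((α + t₁ : ℝ) : EReal) < P.abar → P.bbar < ((β + t₂ : ℝ) : EReal) →
      ((α' + t₁ : ℝ) : EReal) < P.abar → P.bbar < ((β' + t₂ : ℝ) : EReal) →
      KabcAt P α β t₁ x₁ t₂ x₂ = KabcAt P α' β' t₁ x₁ t₂ x₂) ∧
    (∀ α β : ℝ,
      ((α + t₁ : ℝ) : EReal) < P.abar → P.bbar < ((β + t₂ : ℝ) : EReal) →
      Continuous (fun xy : ℝ × ℝ => KabcAt P α β t₁ xy.1 t₂ xy.2)) := by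
  exact ⟨fun α β h1 h2 => int_K3param h1 h2 x₁ x₂,
    fun α β α' β' h1 h2 h3 h4 => indep h1 h2 h3 h4 x₁ x₂,
    fun α β h1 h2 => cont_Kabc h1 h2⟩

end
end

section
/- Let T ⊂ ℝ be countable and let 𝓘_T be as in the context. Let (M^N)_{N≥1} be point processes on ℝ^k (each on its own probability space) such that for every m ≥ 1, all n₁,…,n_m ∈ ℕ, and all pairwise disjoint A₁,…,A_m ∈ 𝓘_T, the limit C(n₁,…,n_m; A₁,…,A_m) := lim_{N→∞} E[∏_{i=1}^m M^N(A_i)!/(M^N(A_i)−n_i)!] exists and is finite. Then there exist a point process M^∞ on some probability space and a countable set T^∞ with T ⊆ T^∞ ⊂ ℝ such that for every m ≥ 1, all n₁,…,n_m ∈ ℕ, and all pairwise disjoint A₁,…,A_m ∈ 𝓘_{T^∞}, E[∏_{i=1}^m M^∞(A_i)!/(M^∞(A_i)−n_i)!] = C(n₁,…,n_m; A₁,…,A_m). -/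
open MeasureTheory Filter Topology
open scoped ENNReal

noncomputable section

/-- A point process on `ℝ^k`. -/
def IsPointProcess (k : ℕ) {Ω : Type*} [MeasurableSpace Ω]
    (M : Ω → Measure (Fin k → ℝ)) : Prop :=
  (∀ A : Set (Fin k → ℝ), MeasurableSet A → Measurable fun ω => M ω A) ∧
  (∀ ω, ∀ B : Set (Fin k → ℝ), MeasurableSet B → Bornology.IsBounded B →
    ∃ n : ℕ, M ω B = n)

/-- Descending factorial `x (x-1) ⋯ (x-n+1)` in `ℝ≥0∞` (with truncated
subtraction); it agrees with the usual one for natural `x`. -/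
def descFactE (x : ℝ≥0∞) (n : ℕ) : ℝ≥0∞ := ∏ i ∈ Finset.range n, (x - (i : ℝ≥0∞))

/-- The family `𝓘_T`: half-open rectangles in `ℝ^k` whose corner coordinates
avoid the countable set `T`. -/
def IsRectAvoiding (k : ℕ) (T : Set ℝ) (A : Set (Fin k → ℝ)) : Prop :=
  ∃ a b : Fin k → ℝ, (∀ i, a i ∉ T) ∧ (∀ i, b i ∉ T) ∧
    A = {x | ∀ i, x i ∈ Set.Ioc (a i) (b i)}

instance enatBorelAux : BorelSpace ℕ∞ := by
  constructor
  refine le_antisymm ?_ ?_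
  · intro s _
    have h : @MeasurableSingletonClass ℕ∞ (borel ℕ∞) := by
      let _ : MeasurableSpace ℕ∞ := borel ℕ∞
      have : BorelSpace ℕ∞ := ⟨rfl⟩
      infer_instance
    exact @Set.Countable.measurableSet ℕ∞ (borel ℕ∞) h s (Set.to_countable s)
  · exact fun s _ => trivial

lemma descFactE_nat (r n : ℕ) : descFactE (r : ℝ≥0∞) n = ((r.descFactorial n : ℕ) : ℝ≥0∞) := by
  unfold descFactE
  rw [Nat.descFactorial_eq_prod_range]
  push_cast
  rfl

lemma pow_le_desc (r p : ℕ) : r ^ p ≤ (2 * p) ^ p + 2 ^ p * r.descFactorial p := by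
  rcases le_total r (2 * p) with h | h
  · exact (Nat.pow_le_pow_left h p).trans (Nat.le_add_right _ _)
  · have h1 : r ≤ 2 * (r + 1 - p) := by omega
    calc r ^ p ≤ (2 * (r + 1 - p)) ^ p := Nat.pow_le_pow_left h1 p
      _ = 2 ^ p * (r + 1 - p) ^ p := mul_pow _ _ _
      _ ≤ 2 ^ p * r.descFactorial p := by
          gcongr
          exact Nat.pow_sub_le_descFactorial r p
      _ ≤ _ := Nat.le_add_left _ _

/-- enumeration of the atoms of an integer valued random measure on the line -/
lemma enum_real {Ω : Type*} [MeasurableSpace Ω] (μ : Ω → Measure ℝ)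
    (hμ : ∀ s, MeasurableSet s → Measurable fun ω => μ ω s)
    (hn : ∀ ω, ∀ s, MeasurableSet s → ∃ n : ℕ, μ ω s = n) :
    ∃ g : ℕ → Ω → ℝ, (∀ i, Measurable (g i)) ∧
      ∀ ω (n : ℕ), μ ω Set.univ = n → μ ω = ∑ i ∈ Finset.range n, Measure.dirac (g i ω) := by
  classical
  have key : ∀ ω (i : ℕ), (i : ℝ≥0∞) < μ ω Set.univ → ∀ t : ℝ,
      sInf {t : ℝ | (i : ℝ≥0∞) < μ ω (Set.Iic t)} ≤ t ↔ (i : ℝ≥0∞) < μ ω (Set.Iic t) := by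
    intro ω i hi
    have hfin : IsFiniteMeasure (μ ω) := by
      obtain ⟨n, hn'⟩ := hn ω Set.univ MeasurableSet.univ
      exact ⟨by rw [hn']; exact ENNReal.natCast_lt_top n⟩
    set S := {t : ℝ | (i : ℝ≥0∞) < μ ω (Set.Iic t)} with hS
    have hne : S.Nonempty := by
      have h1 := tendsto_measure_Iic_atTop (μ ω)
      exact (h1.eventually (lt_mem_nhds hi)).exists
    have hbdd : BddBelow S := by
      have h1 : Tendsto (fun n : ℕ => μ ω (Set.Iic (-(n : ℝ)))) atTop
          (𝓝 (μ ω (⋂ n : ℕ, Set.Iic (-(n : ℝ))))) := by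
        refine tendsto_measure_iInter_atTop (fun n => measurableSet_Iic.nullMeasurableSet) ?_
          ⟨0, measure_ne_top _ _⟩
        intro n m hnm
        apply Set.Iic_subset_Iic.2
        have : (n : ℝ) ≤ m := by exact_mod_cast hnm
        linarith
      have h0 : (⋂ n : ℕ, Set.Iic (-(n : ℝ))) = ∅ := by
        ext x
        simp only [Set.mem_iInter, Set.mem_Iic, Set.mem_empty_iff_false, iff_false, not_forall,
          not_le]
        obtain ⟨n, hn⟩ := exists_nat_gt (-x)
        exact ⟨n, by linarith⟩
      rw [h0, measure_empty] at h1
      have h2 := (h1.eventually (gt_mem_nhds (zero_lt_one)))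
      obtain ⟨n0, ht⟩ := h2.exists
      set t := -(n0 : ℝ)
      refine ⟨t, fun s hs => ?_⟩
      by_contra! hst
      have h3 : μ ω (Set.Iic s) < 1 := (measure_mono (Set.Iic_subset_Iic.2 hst.le)).trans_lt ht
      obtain ⟨m, hm⟩ := hn ω (Set.Iic s) measurableSet_Iic
      have hs' : (i : ℝ≥0∞) < μ ω (Set.Iic s) := hs
      rw [hm] at h3 hs'
      norm_cast at h3 hs'
      omega
    have hmono : ∀ s ∈ S, ∀ t, s ≤ t → t ∈ S := fun s hs t hst =>
      lt_of_lt_of_le hs (measure_mono (Set.Iic_subset_Iic.2 hst))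
    have hmem : sInf S ∈ S := by
      set a := sInf S
      have h1 : Tendsto (fun n : ℕ => μ ω (Set.Iic (a + 1 / ((n : ℝ) + 1)))) atTop
          (𝓝 (μ ω (⋂ n : ℕ, Set.Iic (a + 1 / ((n : ℝ) + 1))))) := by
        refine tendsto_measure_iInter_atTop (fun n => measurableSet_Iic.nullMeasurableSet) ?_
          ⟨0, measure_ne_top _ _⟩
        intro n m hnm
        apply Set.Iic_subset_Iic.2
        have := one_div_le_one_div_of_le (by positivity : (0 : ℝ) < (n : ℝ) + 1)
          (by exact_mod_cast Nat.succ_le_succ hnm : (n : ℝ) + 1 ≤ (m : ℝ) + 1)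
        linarith
      have h2 : (⋂ n : ℕ, Set.Iic (a + 1 / ((n : ℝ) + 1))) = Set.Iic a := by
        ext x
        simp only [Set.mem_iInter, Set.mem_Iic]
        constructor
        · intro h
          have := tendsto_one_div_add_atTop_nhds_zero_nat (𝕜 := ℝ)
          have h3 := (tendsto_const_nhds (x := a)).add this
          rw [add_zero] at h3
          exact ge_of_tendsto' h3 h
        · intro h n
          have : (0 : ℝ) ≤ 1 / ((n : ℝ) + 1) := by positivity
          linarith
      rw [h2] at h1
      have h3 : ∀ n : ℕ, ((i + 1 : ℕ) : ℝ≥0∞) ≤ μ ω (Set.Iic (a + 1 / ((n : ℝ) + 1))) := by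
        intro n
        have hp : (0 : ℝ) < 1 / ((n : ℝ) + 1) := by positivity
        obtain ⟨s, hs, hs2⟩ := exists_lt_of_csInf_lt hne (by linarith : a < a + 1 / ((n : ℝ) + 1))
        have h4 := hmono s hs _ hs2.le
        obtain ⟨m, hm⟩ := hn ω (Set.Iic (a + 1 / ((n : ℝ) + 1))) measurableSet_Iic
        have h5 : (i : ℝ≥0∞) < μ ω (Set.Iic (a + 1 / ((n : ℝ) + 1))) := h4
        rw [hm] at h5 ⊢
        norm_cast at h5 ⊢
      have h4 := ge_of_tendsto' h1 h3
      exact lt_of_lt_of_le (by norm_cast; omega) h4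
    intro t
    exact ⟨fun h => hmono _ hmem t h, fun h => csInf_le hbdd h⟩
  refine ⟨fun i ω => if (i : ℝ≥0∞) < μ ω Set.univ then
    sInf {t : ℝ | (i : ℝ≥0∞) < μ ω (Set.Iic t)} else 0, ?_, ?_⟩
  · intro i
    refine measurable_of_Iic fun t => ?_
    have h0 : MeasurableSet {ω | (i : ℝ≥0∞) < μ ω Set.univ} :=
      measurableSet_lt measurable_const (hμ _ MeasurableSet.univ)
    have h1 : MeasurableSet {ω | (i : ℝ≥0∞) < μ ω (Set.Iic t)} :=
      measurableSet_lt measurable_const (hμ _ measurableSet_Iic)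
    have : (fun ω => if (i : ℝ≥0∞) < μ ω Set.univ then
        sInf {t : ℝ | (i : ℝ≥0∞) < μ ω (Set.Iic t)} else 0) ⁻¹' Set.Iic t =
        ({ω | (i : ℝ≥0∞) < μ ω Set.univ} ∩ {ω | (i : ℝ≥0∞) < μ ω (Set.Iic t)}) ∪
        ({ω | (i : ℝ≥0∞) < μ ω Set.univ}ᶜ ∩ {_ω | (0 : ℝ) ≤ t}) := by
      ext ω
      by_cases h : (i : ℝ≥0∞) < μ ω Set.univ
      · have := key ω i h t
        simp [h, this]
      · simp [h]
    rw [this]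
    exact (h0.inter h1).union (h0.compl.inter (MeasurableSet.const _))
  · intro ω n hω
    have hfin : IsFiniteMeasure (μ ω) := ⟨by rw [hω]; exact ENNReal.natCast_lt_top n⟩
    refine Measure.ext_of_Iic _ _ fun t => ?_
    rw [Measure.finsetSum_apply]
    obtain ⟨m, hm⟩ := hn ω (Set.Iic t) measurableSet_Iic
    have hmn : m ≤ n := by
      have := measure_mono (μ := μ ω) (Set.subset_univ (Set.Iic t))
      rw [hm, hω] at this
      exact_mod_cast this
    have : ∀ i ∈ Finset.range n, (Measure.dirac (if (i : ℝ≥0∞) < μ ω Set.univ then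
        sInf {t : ℝ | (i : ℝ≥0∞) < μ ω (Set.Iic t)} else 0)) (Set.Iic t) =
        if i < m then (1 : ℝ≥0∞) else 0 := by
      intro i hi
      have hi' : (i : ℝ≥0∞) < μ ω Set.univ := by
        rw [hω]; exact_mod_cast Finset.mem_range.1 hi
      rw [if_pos hi', Measure.dirac_apply' _ measurableSet_Iic]
      have := key ω i hi' t
      rw [hm] at this
      simp only [Set.indicator, Set.mem_Iic, this, Nat.cast_lt, Pi.one_apply]
    rw [Finset.sum_congr rfl this, hm, ← Finset.sum_filter]
    simp only [Finset.sum_const, nsmul_eq_mul, mul_one]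
    congr 1
    have : Finset.filter (fun i => i < m) (Finset.range n) = Finset.range m := by
      ext i; simp; omega
    rw [this, Finset.card_range]

lemma enum_gen {Ω E : Type*} [MeasurableSpace Ω] [MeasurableSpace E] [StandardBorelSpace E]
    [Nonempty E] (μ : Ω → Measure E)
    (hμ : ∀ s, MeasurableSet s → Measurable fun ω => μ ω s)
    (hn : ∀ ω, ∀ s, MeasurableSet s → ∃ n : ℕ, μ ω s = n) :
    ∃ g : ℕ → Ω → E, (∀ i, Measurable (g i)) ∧
      ∀ ω (n : ℕ), μ ω Set.univ = n → μ ω = ∑ i ∈ Finset.range n, Measure.dirac (g i ω) := by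
  have he := measurableEmbedding_embeddingReal E
  set f := embeddingReal E
  obtain ⟨h, hh, hhf⟩ := he.exists_measurable_extend (measurable_id (α := E))
    (fun _ => inferInstance)
  obtain ⟨g, hg, hg2⟩ := enum_real (fun ω => (μ ω).map f)
    (fun s hs => by
      simp_rw [Measure.map_apply he.measurable hs]
      exact hμ _ (he.measurable hs))
    (fun ω s hs => by
      simp_rw [Measure.map_apply he.measurable hs]
      exact hn _ _ (he.measurable hs))
  refine ⟨fun i ω => h (g i ω), fun i => hh.comp (hg i), fun ω n hω => ?_⟩
  have h1 := hg2 ω n (by rw [Measure.map_apply he.measurable MeasurableSet.univ]; simpa using hω)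
  have h2 : μ ω = ((μ ω).map f).map h := by
    rw [Measure.map_map hh he.measurable, hhf, Measure.map_id]
  rw [h2, h1]
  ext s hs
  rw [Measure.map_apply hh hs, Measure.finsetSum_apply, Measure.finsetSum_apply]
  refine Finset.sum_congr rfl fun i _ => ?_
  rw [Measure.dirac_apply' _ hs, Measure.dirac_apply' _ (hh hs)]
  rfl

lemma lintegral_nat_tsum {X : Type*} [MeasurableSpace X] (μ : Measure X) (Φ : X → ℕ)
    (hΦ : Measurable Φ) :
    ∫⁻ x, (Φ x : ℝ≥0∞) ∂μ = ∑' v : ℕ, μ {x | v < Φ x} := by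
  classical
  have h1 : ∀ x, (Φ x : ℝ≥0∞) = ∑' v : ℕ, Set.indicator {x | v < Φ x} (fun _ => 1) x := by
    intro x
    rw [tsum_eq_sum (s := Finset.range (Φ x))]
    · rw [Finset.sum_congr rfl (g := fun _ => (1 : ℝ≥0∞))]
      · simp
      · intro i hi
        simp [Finset.mem_range.1 hi]
    · intro b hb
      simpa using hb
  have hm : ∀ v : ℕ, MeasurableSet {x | v < Φ x} := fun v =>
    measurableSet_lt measurable_const hΦ
  simp_rw [h1]
  rw [lintegral_tsum (fun v => (measurable_const.indicator (hm v)).aemeasurable)]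
  refine tsum_congr fun v => ?_
  rw [lintegral_indicator (hm v)]
  simp

lemma limit_lemma {X : Type*} [TopologicalSpace X] [MeasurableSpace X] [OpensMeasurableSpace X]
    [HasOuterApproxClosed X] {U : Filter ℕ} [U.NeBot] (μs : ℕ → ProbabilityMeasure X)
    (μ : ProbabilityMeasure X)
    (hlim : Tendsto μs U (𝓝 μ)) (Φ : X → ℕ) (hΦ : Measurable Φ)
    (hloc : ∀ᵐ x ∂(μ : Measure X), ∀ᶠ y in 𝓝 x, Φ y = Φ x) (S : ℝ≥0∞) (hS : S ≠ ⊤)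
    (hb : ∀ᶠ N in U, ∫⁻ x, (Φ x : ℝ≥0∞) ^ 2 ∂(μs N : Measure X) ≤ S) :
    Tendsto (fun N => ∫⁻ x, (Φ x : ℝ≥0∞) ∂(μs N : Measure X)) U
      (𝓝 (∫⁻ x, (Φ x : ℝ≥0∞) ∂(μ : Measure X))) := by
  have hconv : ∀ v : ℕ, Tendsto (fun N => (μs N : Measure X) {x | v < Φ x}) U
      (𝓝 ((μ : Measure X) {x | v < Φ x})) := by
    intro v
    refine ProbabilityMeasure.tendsto_measure_of_null_frontier_of_tendsto' hlim ?_
    refine measure_mono_null ?_ hloc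
    intro x hx hx2
    have hx2 : ∀ᶠ y in 𝓝 x, Φ y = Φ x := hx2
    rw [frontier_eq_closure_inter_closure] at hx
    obtain ⟨h1, h2⟩ := hx
    rw [mem_closure_iff_frequently] at h1 h2
    obtain ⟨y, hy1, hy2⟩ := (h1.and_eventually hx2).exists
    obtain ⟨z, hz1, hz2⟩ := (h2.and_eventually hx2).exists
    have hy1 : v < Φ y := hy1
    have hz1 : ¬ v < Φ z := hz1
    omega
  have hbound : ∀ᶠ N in U, ∀ v : ℕ, ((μs N : Measure X) {x | v < Φ x}).toReal ≤
      S.toReal * (1 / ((v + 1 : ℕ) : ℝ) ^ 2) := by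
    filter_upwards [hb] with N hN v
    have h1 := mul_meas_ge_le_lintegral (μ := (μs N : Measure X))
      (f := fun x => (Φ x : ℝ≥0∞) ^ 2)
      ((measurable_from_top (f := fun n : ℕ => (n : ℝ≥0∞) ^ 2)).comp hΦ)
      (((v + 1 : ℕ) : ℝ≥0∞) ^ 2)
    have h2 : {x | v < Φ x} ⊆ {x | (((v + 1 : ℕ) : ℝ≥0∞) ^ 2) ≤ (Φ x : ℝ≥0∞) ^ 2} := by
      intro x hx
      have hx : v + 1 ≤ Φ x := hx
      have : ((v + 1 : ℕ) : ℝ≥0∞) ≤ (Φ x : ℝ≥0∞) := by exact_mod_cast hx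
      exact pow_le_pow_left' this 2
    have h3 : (((v + 1 : ℕ) : ℝ≥0∞) ^ 2) * (μs N : Measure X) {x | v < Φ x} ≤ S :=
      (mul_le_mul_right (measure_mono h2) _).trans (h1.trans hN)
    have h4 := ENNReal.toReal_mono hS h3
    rw [ENNReal.toReal_mul, ENNReal.toReal_pow, ENNReal.toReal_natCast] at h4
    rw [mul_one_div, le_div_iff₀ (by positivity)]
    linarith
  have hsum : Summable fun v : ℕ => S.toReal * (1 / ((v + 1 : ℕ) : ℝ) ^ 2) := by
    refine Summable.mul_left _ ?_
    have := Real.summable_one_div_nat_pow.2 (one_lt_two)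
    exact (summable_nat_add_iff 1).2 this
  have hconvR : ∀ v : ℕ, Tendsto (fun N => ((μs N : Measure X) {x | v < Φ x}).toReal) U
      (𝓝 ((μ : Measure X) {x | v < Φ x}).toReal) := fun v =>
    (ENNReal.tendsto_toReal (measure_ne_top _ _)).comp (hconv v)
  have hT := tendsto_tsum_of_dominated_convergence hsum hconvR (by
    filter_upwards [hbound] with N hN v
    rw [Real.norm_of_nonneg ENNReal.toReal_nonneg]
    exact hN v)
  have hb2 : ∀ v : ℕ, ((μ : Measure X) {x | v < Φ x}).toReal ≤
      S.toReal * (1 / ((v + 1 : ℕ) : ℝ) ^ 2) := fun v =>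
    le_of_tendsto (hconvR v) (hbound.mono fun N hN => hN v)
  have conv : ∀ ν : ProbabilityMeasure X, (∀ v : ℕ, ((ν : Measure X) {x | v < Φ x}).toReal ≤
      S.toReal * (1 / ((v + 1 : ℕ) : ℝ) ^ 2)) →
      ∫⁻ x, (Φ x : ℝ≥0∞) ∂(ν : Measure X) =
        ENNReal.ofReal (∑' v : ℕ, ((ν : Measure X) {x | v < Φ x}).toReal) := by
    intro ν hν
    rw [lintegral_nat_tsum _ Φ hΦ, ENNReal.ofReal_tsum_of_nonneg
      (fun _ => ENNReal.toReal_nonneg)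
      (Summable.of_nonneg_of_le (fun _ => ENNReal.toReal_nonneg) hν hsum)]
    refine tsum_congr fun v => ?_
    rw [ENNReal.ofReal_toReal (measure_ne_top _ _)]
  rw [conv μ hb2]
  refine (ENNReal.tendsto_ofReal hT).congr' ?_
  filter_upwards [hbound] with N hN
  exact (conv _ hN).symm

/-- configuration space -/
abbrev XX (k : ℕ) : Type := (Fin k → ℤ) → (ℕ∞ × (ℕ → Fin k → unitInterval))

def ptX {k : ℕ} (x : XX k) (z : Fin k → ℤ) (i : ℕ) : Fin k → ℝ :=
  fun l => (z l : ℝ) + ((x z).2 i l : ℝ)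

def cntX {k : ℕ} (x : XX k) (z : Fin k → ℤ) : ℕ := (x z).1.toNat

def PMX {k : ℕ} (x : XX k) : Measure (Fin k → ℝ) :=
  Measure.sum fun z => ∑ i ∈ Finset.range (cntX x z), Measure.dirac (ptX x z i)

lemma continuous_ptX {k : ℕ} (z : Fin k → ℤ) (i : ℕ) : Continuous fun x : XX k => ptX x z i := by
  unfold ptX
  fun_prop

lemma measurable_cntX {k : ℕ} (z : Fin k → ℤ) : Measurable fun x : XX k => cntX x z := by
  unfold cntX
  exact (measurable_from_top (f := ENat.toNat)).comp ((measurable_pi_apply z).fst)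

lemma PMX_apply {k : ℕ} (x : XX k) {A : Set (Fin k → ℝ)} (hA : MeasurableSet A) :
    PMX x A = ∑' z, ∑ i ∈ Finset.range (cntX x z), A.indicator 1 (ptX x z i) := by
  unfold PMX
  rw [Measure.sum_apply _ hA]
  refine tsum_congr fun z => ?_
  rw [Measure.finsetSum_apply]
  refine Finset.sum_congr rfl fun i _ => ?_
  rw [Measure.dirac_apply' _ hA]

lemma measurable_PMX {k : ℕ} {A : Set (Fin k → ℝ)} (hA : MeasurableSet A) :
    Measurable fun x : XX k => PMX x A := by
  simp_rw [PMX_apply _ hA]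
  refine Measurable.tsum fun z => ?_
  have : ∀ x : XX k, ∑ i ∈ Finset.range (cntX x z), A.indicator (1 : (Fin k → ℝ) → ℝ≥0∞) (ptX x z i) =
      ∑' i : ℕ, Set.indicator {x : XX k | i < cntX x z}
        (fun x => A.indicator (1 : (Fin k → ℝ) → ℝ≥0∞) (ptX x z i)) x := by
    intro x
    rw [tsum_eq_sum (s := Finset.range (cntX x z))]
    · refine Finset.sum_congr rfl fun i hi => ?_
      exact (Set.indicator_of_mem (s := {x : XX k | i < cntX x z}) (Finset.mem_range.1 hi)
        (fun x => A.indicator (1 : (Fin k → ℝ) → ℝ≥0∞) (ptX x z i))).symm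
    · intro i hi
      rw [Set.indicator_of_notMem]
      simpa using hi
  simp_rw [this]
  refine Measurable.tsum fun i => ?_
  refine Measurable.indicator ?_ (measurableSet_lt measurable_const (measurable_cntX z))
  exact (measurable_one.indicator hA).comp (continuous_ptX z i).measurable

lemma exists_Z {k : ℕ} {A : Set (Fin k → ℝ)} (hb : Bornology.IsBounded A) :
    ∃ Z : Finset (Fin k → ℤ), ∀ z ∉ Z, ∀ (x : XX k) i, ptX x z i ∉ A := by
  obtain ⟨R, hR⟩ := hb.subset_closedBall 0
  refine ⟨Finset.Icc (fun _ => -⌈R⌉ - 1) (fun _ => ⌈R⌉), fun z hz x i hx => hz ?_⟩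
  have h1 := hR hx
  rw [mem_closedBall_zero_iff] at h1
  rw [Finset.mem_Icc]
  have h2 : ∀ l, |(z l : ℝ) + ((x z).2 i l : ℝ)| ≤ R := fun l =>
    (norm_le_pi_norm (ptX x z i) l).trans h1
  have h3 := Int.le_ceil R
  constructor
  · intro l
    have := abs_le.1 (h2 l)
    have h4 := ((x z).2 i l).2.2
    have : (-⌈R⌉ - 1 : ℝ) ≤ z l := by linarith
    exact_mod_cast this
  · intro l
    have := abs_le.1 (h2 l)
    have h4 := ((x z).2 i l).2.1
    have : (z l : ℝ) ≤ ⌈R⌉ := by linarith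
    exact_mod_cast this

lemma PMX_finite {k : ℕ} {A : Set (Fin k → ℝ)} (hA : MeasurableSet A)
    {Z : Finset (Fin k → ℤ)} (hZ : ∀ z ∉ Z, ∀ (x : XX k) i, ptX x z i ∉ A) (x : XX k) :
    PMX x A = ∑ z ∈ Z, ∑ i ∈ Finset.range (cntX x z), A.indicator 1 (ptX x z i) := by
  rw [PMX_apply x hA, tsum_eq_sum]
  intro z hz
  refine Finset.sum_eq_zero fun i _ => ?_
  rw [Set.indicator_of_notMem (hZ z hz x i)]

lemma PMX_pp (k : ℕ) : IsPointProcess k (PMX (k := k)) := by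
  classical
  refine ⟨fun A hA => measurable_PMX hA, fun x B hB hb => ?_⟩
  obtain ⟨Z, hZ⟩ := exists_Z hb
  rw [PMX_finite hB hZ x]
  refine ⟨∑ z ∈ Z, ∑ i ∈ Finset.range (cntX x z), if ptX x z i ∈ B then 1 else 0, ?_⟩
  push_cast
  simp [Set.indicator]

lemma rect_meas {k : ℕ} (a b : Fin k → ℝ) :
    MeasurableSet {x : Fin k → ℝ | ∀ i, x i ∈ Set.Ioc (a i) (b i)} := by
  have : {x : Fin k → ℝ | ∀ i, x i ∈ Set.Ioc (a i) (b i)} =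
      Set.univ.pi fun i => Set.Ioc (a i) (b i) := by
    ext; simp
  rw [this]
  exact MeasurableSet.univ_pi fun i => measurableSet_Ioc

lemma rect_bdd {k : ℕ} (a b : Fin k → ℝ) :
    Bornology.IsBounded {x : Fin k → ℝ | ∀ i, x i ∈ Set.Ioc (a i) (b i)} := by
  have : {x : Fin k → ℝ | ∀ i, x i ∈ Set.Ioc (a i) (b i)} =
      Set.univ.pi fun i => Set.Ioc (a i) (b i) := by
    ext; simp
  rw [this]
  exact Bornology.IsBounded.pi fun i => Metric.isBounded_Ioc _ _

lemma PMX_locconst {k : ℕ} (a b : Fin k → ℝ) (x : XX k) (hx : ∀ z, (x z).1 ≠ ⊤)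
    (hab : ∀ z i l, ptX x z i l ≠ a l ∧ ptX x z i l ≠ b l) :
    ∀ᶠ y in 𝓝 x, PMX y {x : Fin k → ℝ | ∀ i, x i ∈ Set.Ioc (a i) (b i)} =
      PMX x {x : Fin k → ℝ | ∀ i, x i ∈ Set.Ioc (a i) (b i)} := by
  classical
  set A := {x : Fin k → ℝ | ∀ i, x i ∈ Set.Ioc (a i) (b i)} with hAdef
  obtain ⟨Z, hZ⟩ := exists_Z (rect_bdd a b)
  have h1 : ∀ z, ∀ᶠ y in 𝓝 x, cntX y z = cntX x z := by
    intro z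
    have hc : ContinuousAt (fun y : XX k => (y z).1) x :=
      (continuous_fst.comp (continuous_apply z)).continuousAt
    have h := ENat.nhds_eq_pure (hx z)
    have hc' : Tendsto (fun y : XX k => (y z).1) (𝓝 x) (pure (x z).1) := by
      rw [← h]; exact hc
    filter_upwards [tendsto_pure.1 hc'] with y hy
    simp [cntX, hy]
  have h2 : ∀ z i, ∀ᶠ y in 𝓝 x, (ptX y z i ∈ A ↔ ptX x z i ∈ A) := by
    intro z i
    have h3 : ∀ l, ∀ᶠ y in 𝓝 x, (ptX y z i l ∈ Set.Ioc (a l) (b l) ↔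
        ptX x z i l ∈ Set.Ioc (a l) (b l)) := by
      intro l
      have hc : ContinuousAt (fun y : XX k => ptX y z i l) x :=
        ((continuous_apply l).comp (continuous_ptX z i)).continuousAt
      obtain ⟨ha, hb⟩ := hab z i l
      have ea : ∀ᶠ y in 𝓝 x, (a l < ptX y z i l ↔ a l < ptX x z i l) := by
        rcases lt_or_gt_of_ne ha with h | h
        · filter_upwards [hc.eventually (gt_mem_nhds h)] with y hy
          exact iff_of_false (not_lt.2 hy.le) (not_lt.2 h.le)
        · filter_upwards [hc.eventually (lt_mem_nhds h)] with y hy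
          exact iff_of_true hy h
      have eb : ∀ᶠ y in 𝓝 x, (ptX y z i l ≤ b l ↔ ptX x z i l ≤ b l) := by
        rcases lt_or_gt_of_ne hb with h | h
        · filter_upwards [hc.eventually (gt_mem_nhds h)] with y hy
          exact iff_of_true hy.le h.le
        · filter_upwards [hc.eventually (lt_mem_nhds h)] with y hy
          exact iff_of_false (not_le.2 hy) (not_le.2 h)
      filter_upwards [ea, eb] with y h4 h5
      simp only [Set.mem_Ioc, h4, h5]
    filter_upwards [eventually_all.2 h3] with y hy
    exact forall_congr' hy
  have h1' : ∀ᶠ y in 𝓝 x, ∀ z ∈ Z, cntX y z = cntX x z :=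
    (Finset.eventually_all Z).2 fun z _ => h1 z
  have h2' : ∀ᶠ y in 𝓝 x, ∀ z ∈ Z, ∀ i ∈ Finset.range (cntX x z),
      (ptX y z i ∈ A ↔ ptX x z i ∈ A) :=
    (Finset.eventually_all Z).2 fun z _ => (Finset.eventually_all _).2 fun i _ => h2 z i
  filter_upwards [h1', h2'] with y hy1 hy2
  rw [PMX_finite (rect_meas a b) hZ, PMX_finite (rect_meas a b) hZ]
  refine Finset.sum_congr rfl fun z hz => ?_
  rw [hy1 z hz]
  refine Finset.sum_congr rfl fun i hi => ?_
  have := hy2 z hz i hi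
  by_cases hxA : ptX x z i ∈ A
  · rw [Set.indicator_of_mem (this.2 hxA), Set.indicator_of_mem hxA]
    rfl
  · rw [Set.indicator_of_notMem (fun h => hxA (this.1 h)), Set.indicator_of_notMem hxA]

/-- the half open unit cells -/
def cell {k : ℕ} (z : Fin k → ℤ) : Set (Fin k → ℝ) := {x | ∀ l, ⌊x l⌋ = z l}

lemma cell_meas {k : ℕ} (z : Fin k → ℤ) : MeasurableSet (cell z) := by
  have : cell z = ⋂ l, (fun x : Fin k → ℝ => ⌊x l⌋) ⁻¹' {z l} := by
    ext x; simp [cell]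
  rw [this]
  exact MeasurableSet.iInter fun l =>
    (Int.measurable_floor.comp (measurable_pi_apply l)) (MeasurableSet.singleton _)

lemma cell_bdd {k : ℕ} (z : Fin k → ℤ) : Bornology.IsBounded (cell z) := by
  refine (Metric.isBounded_Icc (fun l => (z l : ℝ)) (fun l => (z l : ℝ) + 1)).subset ?_
  intro x hx
  constructor
  · intro l
    change (z l : ℝ) ≤ x l
    rw [← hx l]
    exact Int.floor_le _
  · intro l
    change x l ≤ (z l : ℝ) + 1
    rw [← hx l]
    exact (Int.lt_floor_add_one _).le

lemma exists_enum {k : ℕ} {Ω : Type*} [MeasurableSpace Ω] (M : Ω → Measure (Fin k → ℝ))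
    (hM : IsPointProcess k M) :
    ∃ F : Ω → XX k, Measurable F ∧ (∀ ω, PMX (F ω) = M ω) ∧
      ∀ ω z, (((F ω z).1 : ℕ∞) : ℝ≥0∞) = M ω (cell z) := by
  classical
  have hcell : ∀ (z : Fin k → ℤ) ω s, MeasurableSet s → ∃ n : ℕ, M ω (s ∩ cell z) = n :=
    fun z ω s hs => hM.2 ω _ (hs.inter (cell_meas z)) ((cell_bdd z).subset Set.inter_subset_right)
  have := fun z : Fin k → ℤ => enum_gen (fun ω => (M ω).restrict (cell z))
    (fun s hs => by
      simp_rw [Measure.restrict_apply hs]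
      exact hM.1 _ (hs.inter (cell_meas z)))
    (fun ω s hs => by
      simp_rw [Measure.restrict_apply hs]
      exact hcell z ω s hs)
  choose g hg hg2 using this
  let F : Ω → XX k := fun ω z => (((M ω (cell z)).toNNReal.toReal.toNNReal : NNReal) |>
    fun r => ((⌊r⌋₊ : ℕ) : ℕ∞), fun i l => Set.projIcc 0 1 zero_le_one (g z i ω l - z l))
  have hF1 : ∀ ω z (n : ℕ), M ω (cell z) = n → (F ω z).1 = n := by
    intro ω z n h
    simp [F, h]
  have hcn : ∀ ω z, ∃ n : ℕ, M ω (cell z) = n := fun ω z =>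
    hM.2 ω _ (cell_meas z) (cell_bdd z)
  refine ⟨F, ?_, ?_, ?_⟩
  · refine measurable_pi_lambda _ fun z => Measurable.prodMk ?_ ?_
    · refine (measurable_from_top (f := fun n : ℕ => (n : ℕ∞))).comp ?_
      refine Nat.measurable_floor.comp ?_
      exact ((hM.1 _ (cell_meas z)).ennreal_toNNReal.coe_nnreal_real).real_toNNReal
    · refine measurable_pi_lambda _ fun i => measurable_pi_lambda _ fun l => ?_
      refine continuous_projIcc.measurable.comp ?_
      exact ((measurable_pi_apply l).comp (hg z i)).sub measurable_const
  · intro ω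
    ext s hs
    unfold PMX
    rw [Measure.sum_apply _ hs]
    have hz : ∀ z, (∑ i ∈ Finset.range (cntX (F ω) z), Measure.dirac (ptX (F ω) z i)) =
        (M ω).restrict (cell z) := by
      intro z
      obtain ⟨n, hn⟩ := hcn ω z
      have h1 := hg2 z ω n (by rw [Measure.restrict_apply_univ]; exact hn)
      have hc : cntX (F ω) z = n := by simp [cntX, hF1 ω z n hn]
      rw [hc, h1]
      refine Finset.sum_congr rfl fun i hi => ?_
      have hmem : g z i ω ∈ cell z := by
        have h2 : (M ω).restrict (cell z) (cell z)ᶜ = 0 := by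
          rw [Measure.restrict_apply (cell_meas z).compl]; simp
        rw [h1, Measure.finsetSum_apply, Finset.sum_eq_zero_iff] at h2
        have h3 := h2 i hi
        rw [Measure.dirac_apply' _ (cell_meas z).compl] at h3
        by_contra h
        simp [h] at h3
      congr 1
      ext l
      have h4 : ⌊g z i ω l⌋ = z l := hmem l
      have h5 : g z i ω l - z l ∈ Set.Icc (0 : ℝ) 1 := by
        rw [← h4]
        exact ⟨by linarith [Int.floor_le (g z i ω l)],
          by linarith [Int.lt_floor_add_one (g z i ω l)]⟩
      simp only [ptX, F]
      rw [Set.projIcc_of_mem _ h5]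
      simp
    simp_rw [hz]
    have hU : (⋃ z : Fin k → ℤ, s ∩ cell z) = s := by
      rw [← Set.inter_iUnion]
      refine Set.inter_eq_left.2 fun x _ => Set.mem_iUnion.2 ⟨fun l => ⌊x l⌋, fun l => rfl⟩
    conv_rhs => rw [← hU]
    rw [measure_iUnion _ (fun z => hs.inter (cell_meas z))]
    · refine tsum_congr fun z => ?_
      rw [Measure.restrict_apply hs]
    · intro z w hzw
      refine Set.disjoint_left.2 fun x hx hy => hzw ?_
      ext l
      rw [← hx.2 l, ← hy.2 l]
  · intro ω z
    obtain ⟨n, hn⟩ := hcn ω z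
    rw [hF1 ω z n hn, hn]
    simp

instance borelXX (k : ℕ) : BorelSpace (XX k) := inferInstance

instance opensXX (k : ℕ) : OpensMeasurableSpace (XX k) := inferInstance

lemma moment_bound {k : ℕ} {T : Set ℝ} (hT : T.Countable)
    {Ω : ℕ → Type} [∀ N, MeasurableSpace (Ω N)] {P : ∀ N, Measure (Ω N)}
    (hP : ∀ N, IsProbabilityMeasure (P N))
    {M : ∀ N, Ω N → Measure (Fin k → ℝ)} (hM : ∀ N, IsPointProcess k (M N))
    {C : (m : ℕ) → (Fin m → ℕ) → (Fin m → Set (Fin k → ℝ)) → ℝ≥0∞}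
    (hC : ∀ (m : ℕ) (n : Fin m → ℕ) (A : Fin m → Set (Fin k → ℝ)),
      0 < m → (∀ j, 0 < n j) → (∀ j, IsRectAvoiding k T (A j)) →
      (∀ i j, i ≠ j → Disjoint (A i) (A j)) →
      C m n A ≠ ⊤ ∧
      Tendsto (fun N => ∫⁻ ω, ∏ j, descFactE (M N ω (A j)) (n j) ∂(P N))
        atTop (𝓝 (C m n A)))
    {B : Set (Fin k → ℝ)} (hB : Bornology.IsBounded B) (p : ℕ) (hp : 0 < p) :
    ∃ S : ℝ≥0∞, S ≠ ⊤ ∧ ∀ᶠ N in atTop, ∫⁻ ω, (M N ω B) ^ p ∂(P N) ≤ S := by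
  obtain ⟨R, hR⟩ := hB.subset_closedBall 0
  obtain ⟨t, ht1, ht2⟩ : ∃ t, t ∈ Set.Ioi R ∧ t ∉ T ∪ (-T) := by
    have hc : (T ∪ (-T)).Countable := hT.union (by
      rw [← Set.image_neg_eq_neg]
      exact hT.image _)
    obtain ⟨t, h1, h2⟩ := (hc.dense_compl ℝ).exists_mem_open (isOpen_Ioi (a := R))
      ⟨R + 1, by simp⟩
    exact ⟨t, h2, h1⟩
  let D : Set (Fin k → ℝ) := {x | ∀ i, x i ∈ Set.Ioc ((fun _ => -t : Fin k → ℝ) i)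
    ((fun _ => t : Fin k → ℝ) i)}
  have hBD : B ⊆ D := by
    intro x hx l
    have h1 := hR hx
    rw [mem_closedBall_zero_iff] at h1
    have h2 := abs_le.1 ((norm_le_pi_norm x l).trans h1)
    have ht1 : R < t := ht1
    exact ⟨by dsimp only; linarith, by dsimp only; linarith⟩
  have hD : IsRectAvoiding k T D := by
    refine ⟨fun _ => -t, fun _ => t, fun _ h => ht2 (Or.inr ?_), fun _ h => ht2 (Or.inl h), rfl⟩
    exact h
  obtain ⟨h1, h2⟩ := hC 1 (fun _ => p) (fun _ => D) one_pos (fun _ => hp) (fun _ => hD)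
    (fun i j hij => (hij (Subsingleton.elim i j)).elim)
  set c := C 1 (fun _ => p) (fun _ => D)
  refine ⟨((2 * p) ^ p : ℕ) + (2 ^ p : ℕ) * (c + 1),
    ENNReal.add_ne_top.2 ⟨ENNReal.natCast_ne_top _,
      ENNReal.mul_ne_top (ENNReal.natCast_ne_top _) (ENNReal.add_ne_top.2 ⟨h1, ENNReal.one_ne_top⟩)⟩,
    ?_⟩
  have h3 : ∀ᶠ N in atTop, ∫⁻ ω, descFactE (M N ω D) p ∂(P N) < c + 1 := by
    have := h2.eventually (gt_mem_nhds (ENNReal.lt_add_right h1 one_ne_zero))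
    simpa using this
  filter_upwards [h3] with N hN
  have := hP N
  calc ∫⁻ ω, (M N ω B) ^ p ∂(P N)
      ≤ ∫⁻ ω, (((2 * p) ^ p : ℕ) + (2 ^ p : ℕ) * descFactE (M N ω D) p) ∂(P N) := by
        refine lintegral_mono fun ω => ?_
        obtain ⟨r, hr⟩ := (hM N).2 ω D (rect_meas _ _) (rect_bdd _ _)
        refine (pow_le_pow_left' (measure_mono hBD) p).trans ?_
        simp only [hr, descFactE_nat]
        exact_mod_cast pow_le_desc r p
    _ = ((2 * p) ^ p : ℕ) + (2 ^ p : ℕ) * ∫⁻ ω, descFactE (M N ω D) p ∂(P N) := by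
        rw [lintegral_add_left measurable_const,
          lintegral_const_mul' _ _ (ENNReal.natCast_ne_top _)]
        simp
    _ ≤ _ := by gcongr

lemma cnt_ne_top {k : ℕ} {U : Filter ℕ} [U.NeBot] (μs : ℕ → ProbabilityMeasure (XX k))
    (μ : ProbabilityMeasure (XX k)) (hlim : Tendsto μs U (𝓝 μ)) (z : Fin k → ℤ)
    (S : ℝ≥0∞) (hS : S ≠ ⊤)
    (hb : ∀ᶠ N in U, ∫⁻ x, (((x z).1 : ℕ∞) : ℝ≥0∞) ∂(μs N : Measure (XX k)) ≤ S) :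
    ∀ᵐ x ∂(μ : Measure (XX k)), (x z).1 ≠ ⊤ := by
  rw [ae_iff]
  simp only [not_not]
  have hle : ∀ v : ℕ, (v : ℝ≥0∞) * (μ : Measure (XX k)) {x | (x z).1 = ⊤} ≤ S := by
    intro v
    have hcont : Continuous fun x : XX k => (x z).1 :=
      continuous_fst.comp (continuous_apply z)
    have hcl : IsClopen {x : XX k | (v : ℕ∞) ≤ (x z).1} := by
      refine IsClopen.preimage (s := Set.Ici (v : ℕ∞)) ⟨isClosed_Ici, ?_⟩ hcont
      rcases v with _ | v
      · have : Set.Ici ((0 : ℕ) : ℕ∞) = Set.univ := by ext; simp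
        rw [this]; exact isOpen_univ
      · have : Set.Ici ((v + 1 : ℕ) : ℕ∞) = Set.Ioi (v : ℕ∞) := by
          ext n
          simp only [Set.mem_Ici, Set.mem_Ioi]
          push_cast
          exact ENat.add_one_le_iff (ENat.natCast_ne_top v)
        rw [this]; exact isOpen_Ioi
    have h1 := ProbabilityMeasure.tendsto_measure_of_null_frontier_of_tendsto' hlim
      (E := {x : XX k | (v : ℕ∞) ≤ (x z).1}) (by rw [hcl.frontier_eq, measure_empty])
    have h2 := ENNReal.Tendsto.const_mul (a := (v : ℝ≥0∞)) h1 (Or.inr (ENNReal.natCast_ne_top v))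
    refine le_trans ?_ (le_of_tendsto h2 ?_ (b := S))
    · gcongr
      intro h
      rw [h]; exact le_top
    · filter_upwards [hb] with N hN
      refine le_trans ?_ hN
      have h3 := mul_meas_ge_le_lintegral (μ := (μs N : Measure (XX k)))
        (f := fun x => (((x z).1 : ℕ∞) : ℝ≥0∞))
        ((measurable_from_top (f := fun n : ℕ∞ => (n : ℝ≥0∞))).comp hcont.measurable)
        (v : ℝ≥0∞)
      refine le_trans ?_ h3
      gcongr with x
      intro h
      exact_mod_cast ENat.toENNReal_le.2 h
  by_contra h0
  have h1 : Tendsto (fun v : ℕ => (v : ℝ≥0∞) * (μ : Measure (XX k)) {x | (x z).1 = ⊤}) atTop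
      (𝓝 (⊤ * (μ : Measure (XX k)) {x | (x z).1 = ⊤})) :=
    ENNReal.Tendsto.mul_const ENNReal.tendsto_nat_nhds_top (Or.inl ENNReal.top_ne_zero)
  rw [ENNReal.top_mul h0] at h1
  exact hS (top_le_iff.1 (le_of_tendsto' h1 hle))

/-- Proposition 2.4 (`PPConv`), first part: if the joint factorial moments of a
sequence of point processes converge on disjoint rectangles in `𝓘_T`, then there
is a point process realizing the limiting factorial moments on `𝓘_{T^∞}` for some
countable `T^∞ ⊇ T`. -/
theorem stmt4 (k : ℕ) (T : Set ℝ) (hT : T.Countable)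
    (Ω : ℕ → Type) [∀ N, MeasurableSpace (Ω N)] (P : ∀ N, Measure (Ω N))
    (hP : ∀ N, IsProbabilityMeasure (P N))
    (M : ∀ N, Ω N → Measure (Fin k → ℝ)) (hM : ∀ N, IsPointProcess k (M N))
    (C : (m : ℕ) → (Fin m → ℕ) → (Fin m → Set (Fin k → ℝ)) → ℝ≥0∞)
    (hC : ∀ (m : ℕ) (n : Fin m → ℕ) (A : Fin m → Set (Fin k → ℝ)),
      0 < m → (∀ j, 0 < n j) → (∀ j, IsRectAvoiding k T (A j)) →
      (∀ i j, i ≠ j → Disjoint (A i) (A j)) →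
      C m n A ≠ ⊤ ∧
      Tendsto (fun N => ∫⁻ ω, ∏ j, descFactE (M N ω (A j)) (n j) ∂(P N))
        atTop (𝓝 (C m n A))) :
    ∃ (Ω' : Type) (_ : MeasurableSpace Ω') (P' : Measure Ω'),
      IsProbabilityMeasure P' ∧
      ∃ (M' : Ω' → Measure (Fin k → ℝ)) (T' : Set ℝ),
        IsPointProcess k M' ∧ T'.Countable ∧ T ⊆ T' ∧
        ∀ (m : ℕ) (n : Fin m → ℕ) (A : Fin m → Set (Fin k → ℝ)),
          0 < m → (∀ j, 0 < n j) → (∀ j, IsRectAvoiding k T' (A j)) →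
          (∀ i j, i ≠ j → Disjoint (A i) (A j)) →
          (∫⁻ ω, ∏ j, descFactE (M' ω (A j)) (n j) ∂P') = C m n A := by
  classical
  choose F hFm hFM hFc using fun N => exists_enum (M N) (hM N)
  let μs : ℕ → ProbabilityMeasure (XX k) := fun N =>
    ⟨(P N).map (F N), by
      have := hP N
      exact Measure.isProbabilityMeasure_map (hFm N).aemeasurable⟩
  have hμs : ∀ N (f : XX k → ℝ≥0∞), Measurable f →
      ∫⁻ x, f x ∂(μs N : Measure (XX k)) = ∫⁻ ω, f (F N ω) ∂(P N) := fun N f hf =>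
    lintegral_map hf (hFm N)
  let U : Ultrafilter ℕ := Ultrafilter.of atTop
  have hU : (U : Filter ℕ) ≤ atTop := Ultrafilter.of_le atTop
  obtain ⟨μ, hμ⟩ : ∃ μ, Tendsto μs U (𝓝 μ) := by
    obtain ⟨μ, -, hμ⟩ := isCompact_univ.ultrafilter_le_nhds (U.map μs) (by simp)
    exact ⟨μ, hμ⟩
  let T' : Set ℝ := T ∪ ⋃ (z : Fin k → ℤ) (i : ℕ) (l : Fin k),
    {t | 0 < (μ : Measure (XX k)) {x | ptX x z i l = t}}
  have hptm : ∀ z i l, Measurable fun x : XX k => ptX x z i l := fun z i l =>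
    (measurable_pi_apply l).comp (continuous_ptX z i).measurable
  refine ⟨XX k, inferInstance, μ, inferInstance, PMX, T', PMX_pp k, ?_, Set.subset_union_left, ?_⟩
  · refine hT.union (Set.countable_iUnion fun z => Set.countable_iUnion fun i =>
      Set.countable_iUnion fun l => Measure.countable_meas_level_set_pos (hptm z i l))
  intro m n A hm hn hA hdisj
  choose a b ha hb hAab using hA
  have hAm : ∀ j, MeasurableSet (A j) := fun j => by rw [hAab j]; exact rect_meas _ _
  have hAb : ∀ j, Bornology.IsBounded (A j) := fun j => by rw [hAab j]; exact rect_bdd _ _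
  obtain ⟨-, hlim⟩ := hC m n A hm hn (fun j => ⟨a j, b j, fun i h => ha j i (Or.inl h),
    fun i h => hb j i (Or.inl h), hAab j⟩) hdisj
  choose r hr using fun (x : XX k) (j : Fin m) => (PMX_pp k).2 x (A j) (hAm j) (hAb j)
  have hrm : ∀ j, Measurable fun x => r x j := by
    intro j
    have h1 : (fun x => r x j) = fun x => ⌊(PMX x (A j)).toNNReal⌋₊ := by
      ext x; simp [hr x j]
    rw [h1]
    exact Nat.measurable_floor.comp (measurable_PMX (hAm j)).ennreal_toNNReal
  let Φ : XX k → ℕ := fun x => ∏ j, (r x j).descFactorial (n j)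
  have hΦ : ∀ x, ∏ j, descFactE (PMX x (A j)) (n j) = (Φ x : ℝ≥0∞) := by
    intro x
    simp only [Φ, hr, descFactE_nat]
    push_cast
    rfl
  have hΦm : Measurable Φ := Finset.measurable_prod _ fun j _ =>
    (measurable_from_top (f := fun q : ℕ => q.descFactorial (n j))).comp (hrm j)
  simp_rw [hΦ]
  have hgood : ∀ᵐ x ∂(μ : Measure (XX k)), ∀ z, (x z).1 ≠ ⊤ := by
    refine ae_all_iff.2 fun z => ?_
    obtain ⟨S, hS, hSb⟩ := moment_bound hT hP hM hC (cell_bdd z) 1 one_pos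
    refine cnt_ne_top μs μ hμ z S hS ?_
    filter_upwards [hU hSb] with N hN
    rw [hμs N (fun x => (((x z).1 : ℕ∞) : ℝ≥0∞))
      ((measurable_from_top (f := fun n : ℕ∞ => (n : ℝ≥0∞))).comp (measurable_pi_apply z).fst)]
    simpa [hFc] using hN
  have hpos : ∀ z i l, ∀ t ∉ T', ∀ᵐ x ∂(μ : Measure (XX k)), ptX x z i l ≠ t := by
    intro z i l t ht
    rw [ae_iff]
    simp only [not_not]
    by_contra h
    exact ht (Or.inr (Set.mem_iUnion.2 ⟨z, Set.mem_iUnion.2 ⟨i, Set.mem_iUnion.2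
      ⟨l, pos_iff_ne_zero.2 h⟩⟩⟩))
  have hgood2 : ∀ᵐ x ∂(μ : Measure (XX k)), ∀ j z i l,
      ptX x z i l ≠ a j l ∧ ptX x z i l ≠ b j l := by
    refine ae_all_iff.2 fun j => ae_all_iff.2 fun z => ae_all_iff.2 fun i =>
      ae_all_iff.2 fun l => ?_
    exact (hpos z i l _ (ha j l)).and (hpos z i l _ (hb j l))
  have hloc : ∀ᵐ x ∂(μ : Measure (XX k)), ∀ᶠ y in 𝓝 x, Φ y = Φ x := by
    filter_upwards [hgood, hgood2] with x h1 h2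
    have h3 : ∀ j, ∀ᶠ y in 𝓝 x, r y j = r x j := by
      intro j
      filter_upwards [PMX_locconst (a j) (b j) x h1 (h2 j)] with y hy
      rw [← hAab j, hr, hr] at hy
      exact_mod_cast hy
    filter_upwards [eventually_all.2 h3] with y hy
    simp only [Φ, hy]
  have hBb : Bornology.IsBounded (⋃ j, A j) := by
    rw [Bornology.isBounded_iUnion]
    exact hAb
  have hs : 0 < (∑ j, n j) * 2 := by
    have := Finset.single_le_sum (f := n) (fun i _ => Nat.zero_le _)
      (Finset.mem_univ (⟨0, hm⟩ : Fin m))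
    have := hn ⟨0, hm⟩
    omega
  obtain ⟨S, hS, hSb⟩ := moment_bound hT hP hM hC hBb ((∑ j, n j) * 2) hs
  have hΦle : ∀ x, (Φ x : ℝ≥0∞) ≤ (PMX x (⋃ j, A j)) ^ (∑ j, n j) := by
    intro x
    rw [← Finset.prod_pow_eq_pow_sum]
    simp only [Φ]
    push_cast
    refine Finset.prod_le_prod' fun j _ => ?_
    refine le_trans ?_ (pow_le_pow_left' (measure_mono (Set.subset_iUnion A j)) (n j))
    rw [hr]
    exact_mod_cast Nat.descFactorial_le_pow _ _
  have hcast : Measurable fun x => (Φ x : ℝ≥0∞) :=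
    (measurable_from_top (f := fun q : ℕ => (q : ℝ≥0∞))).comp hΦm
  have hmain := limit_lemma (U := U) μs μ hμ Φ hΦm hloc S hS (by
    filter_upwards [hU hSb] with N hN
    rw [hμs N _ (hcast.pow_const 2)]
    refine le_trans (lintegral_mono fun ω => ?_) hN
    rw [pow_mul]
    refine pow_le_pow_left' ?_ 2
    have := hΦle (F N ω)
    rwa [hFM] at this)
  refine tendsto_nhds_unique hmain ((hlim.mono_left hU).congr fun N => ?_)
  rw [hμs N _ hcast]
  refine lintegral_congr fun ω => ?_
  rw [← hΦ, hFM]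
end
end
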